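/- Theorem 4.1 (existence of approximate correctors): Let d ≥ 2, assume m satisfies the mobility assumptions and W the double-well assumptions, let q be the standing wave and m̄ the effective mobility. Fix a unit vector e ∈ ℝ^d with e ∉ ℝℤ^d and ν > 0. Then there exists P : ℝ × ℝ^d → ℝ, ℤ^d-periodic in its second argument, twice continuously differentiable with bounded derivatives up to order two, such that for all (s,y) ∈ ℝ × ℝ^d: |[m(y, q'(s)e) − m̄(e)] q'(s) − (∂²_s P(s,y) + 2⟨e, D_y ∂_s P(s,y)⟩ + Δ_y P(s,y)) + W''(q(s)) P(s,y)| ≤ ν q'(s). -/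

import Mathlib

open Set Filter Topology MeasureTheory RealInnerProductSpace

noncomputable section

abbrev Euc (d : ℕ) := EuclideanSpace ℝ (Fin d)

def IsIntVec {d : ℕ} (z : Euc d) : Prop := ∀ i, ∃ n : ℤ, z i = (n : ℝ)

/-- p ∈ ℝℤ^d, i.e. p is a real multiple of an integer vector. -/
def RatDir {d : ℕ} (p : Euc d) : Prop :=
  ∃ (c : ℝ) (k : Fin d → ℤ), ∀ i, p i = c * (k i : ℝ)

def unitCube (d : ℕ) : Set (Euc d) := {y | ∀ i, y i ∈ Set.Icc (0:ℝ) 1}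

noncomputable def clTrace {d : ℕ} (A : Euc d →L[ℝ] Euc d) : ℝ :=
  LinearMap.trace ℝ (Euc d) (A : Euc d →ₗ[ℝ] Euc d)

/-- ∂²_s P (s,y). -/
noncomputable def dSS {d : ℕ} (P : ℝ × Euc d → ℝ) (s : ℝ) (y : Euc d) : ℝ :=
  deriv (fun s' => deriv (fun s'' => P (s'', y)) s') s

/-- ⟨e, D_y ∂_s P⟩ (s,y). -/
noncomputable def mixedDeriv {d : ℕ} (e : Euc d) (P : ℝ × Euc d → ℝ) (s : ℝ) (y : Euc d) : ℝ :=
  ⟪e, gradient (fun y' => deriv (fun s' => P (s', y')) s) y⟫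

/-- Δ_y P (s,y). -/
noncomputable def lapY {d : ℕ} (P : ℝ × Euc d → ℝ) (s : ℝ) (y : Euc d) : ℝ :=
  clTrace (fderiv ℝ (fun y' => gradient (fun z => P (s, z)) y') y)

def DoubleWell (W : ℝ → ℝ) : Prop :=
  ContDiff ℝ 3 W ∧
  (∀ u ∈ Set.Icc (-1:ℝ) 1, 0 ≤ W u) ∧
  W (-1) = 0 ∧ W 1 = 0 ∧
  (∀ u ∈ Set.Ioo (-1:ℝ) 1, 0 < W u) ∧
  deriv W (-1) = 0 ∧ deriv W 0 = 0 ∧ deriv W 1 = 0 ∧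
  (∀ u ∈ Set.Ioo (-1:ℝ) 0, 0 < deriv W u) ∧
  (∀ u ∈ Set.Ioo (0:ℝ) 1, deriv W u < 0) ∧
  0 < deriv (deriv W) (-1) ∧ 0 < deriv (deriv W) 1 ∧ deriv (deriv W) 0 < 0

def StandingWave (W q : ℝ → ℝ) : Prop :=
  ContDiff ℝ 2 q ∧ StrictMono q ∧ (∀ s, q s ∈ Set.Ioo (-1:ℝ) 1) ∧ q 0 = 0 ∧
  (∀ s, deriv (deriv q) s = deriv W (q s)) ∧
  Filter.Tendsto q Filter.atTop (nhds 1) ∧ Filter.Tendsto q Filter.atBot (nhds (-1))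

def Mobility (d : ℕ) (m : Euc d → Euc d → ℝ) (θ Θ : ℝ) : Prop :=
  Continuous (fun p : Euc d × Euc d => m p.1 p.2) ∧
  (∀ y v z, IsIntVec z → m (y + z) v = m y v) ∧
  0 < θ ∧ (∀ y v, θ ≤ m y v ∧ m y v ≤ Θ) ∧
  (∃ H : ℝ, ∀ y y' v, |m y v - m y' v| ≤ H * ‖y - y'‖)

/-- The effective mobility. -/
noncomputable def effMob {d : ℕ} (m : Euc d → Euc d → ℝ) (q : ℝ → ℝ) (e : Euc d) : ℝ :=
  (∫ s : ℝ, ∫ y in unitCube d, m y (deriv q s • e) * (deriv q s)^2) /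
  (∫ s : ℝ, (deriv q s)^2)

open scoped BoundedContinuousFunction

/-- A bounded supersolution of `u' + k u = 0` is nonnegative. -/
theorem nonneg_of_deriv_add_mul_nonneg {u u' : ℝ → ℝ} {k C : ℝ} (hk : 0 < k)
    (hu : ∀ s, HasDerivAt u (u' s) s) (hC : ∀ s, |u s| ≤ C)
    (h : ∀ s, 0 ≤ u' s + k * u s) (s : ℝ) : 0 ≤ u s := by
  have hd : ∀ x, HasDerivAt (fun x => Real.exp (k * x) * u x)
      (Real.exp (k * x) * (u' x + k * u x)) x := by
    intro x
    have h1 : HasDerivAt (fun x : ℝ => k * x) k x := by simpa using (hasDerivAt_id x).const_mul k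
    exact (h1.exp.mul (hu x)).congr_deriv (by ring)
  have hmono : Monotone (fun x => Real.exp (k * x) * u x) :=
    monotone_of_hasDerivAt_nonneg hd fun x => mul_nonneg (Real.exp_pos _).le (h x)
  have hlim : Tendsto (fun x => Real.exp (k * x) * u x) atBot (𝓝 0) := by
    have h0 : Tendsto (fun x : ℝ => Real.exp (k * x)) atBot (𝓝 0) :=
      Real.tendsto_exp_atBot.comp (tendsto_id.const_mul_atBot hk)
    exact h0.zero_mul_isBoundedUnder_le
      (isBoundedUnder_of ⟨C, fun x => by simpa using hC x⟩)
  have := hmono.le_of_tendsto hlim s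
  exact nonneg_of_mul_nonneg_right this (Real.exp_pos _)

/-- A bounded supersolution of `u'' = k² u` with bounded derivative is nonnegative. -/
theorem nonneg_of_deriv2_le_sq_mul {u u' u'' : ℝ → ℝ} {k C : ℝ} (hk : 0 < k)
    (hu : ∀ s, HasDerivAt u (u' s) s) (hu' : ∀ s, HasDerivAt u' (u'' s) s)
    (hC : ∀ s, |u s| ≤ C) (hC' : ∀ s, |u' s| ≤ C)
    (h : ∀ s, u'' s ≤ k ^ 2 * u s) (s : ℝ) : 0 ≤ u s := by
  refine nonneg_of_deriv_add_mul_nonneg hk hu hC (fun x => ?_) s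
  have key := nonneg_of_deriv_add_mul_nonneg (u := fun x => u' (-x) + k * u (-x))
    (u' := fun x => -(u'' (-x) + k * u' (-x))) (C := C + k * C) hk ?_ ?_ ?_ (-x)
  · simpa using key
  · intro x
    have h1 := ((hu' (-x)).add ((hu (-x)).const_mul k)).scomp x (hasDerivAt_neg x)
    simpa [Function.comp_def] using h1
  · intro x
    refine (abs_add_le _ _).trans (add_le_add (hC' _) ?_)
    rw [abs_mul, abs_of_pos hk]
    exact mul_le_mul_of_nonneg_left (hC _) hk.le
  · intro x
    nlinarith [h (-x)]

/-- The primitive of an integrable continuous function vanishing at `-∞`. -/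
theorem hasDerivAt_integral_Iic {f : ℝ → ℝ} (hf : Continuous f)
    (hint : ∀ s, IntegrableOn f (Iic s)) (s : ℝ) :
    HasDerivAt (fun s => ∫ t in Iic s, f t) (f s) s := by
  have h1 : (fun s => ∫ t in Iic s, f t) = fun s => (∫ t in Iic 0, f t) + ∫ t in (0:ℝ)..s, f t := by
    funext x
    rw [← intervalIntegral.integral_Iic_sub_Iic (hint 0) (hint x)]
    ring
  rw [h1]
  simpa using (hf.integral_hasStrictDerivAt 0 s).hasDerivAt.const_add (∫ t in Iic 0, f t)

theorem exists_bounded_solution_deriv_add {G : ℝ → ℝ} {k C : ℝ} (hk : 0 < k) (hG : Continuous G)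
    (hC : ∀ s, |G s| ≤ C) :
    ∃ u : ℝ → ℝ, (∀ s, HasDerivAt u (G s - k * u s) s) ∧ ∀ s, |u s| ≤ C / k := by
  have hexp : ∀ s : ℝ, IntegrableOn (fun t => Real.exp (k * t)) (Iic s) := fun s =>
    integrableOn_exp_mul_Iic hk s
  have hint : ∀ s : ℝ, IntegrableOn (fun t => Real.exp (k * t) * G t) (Iic s) := by
    intro s
    exact (hexp s).mul_bdd (c := C) hG.aestronglyMeasurable
      (Eventually.of_forall fun x => by simpa using hC x)
  refine ⟨fun s => Real.exp (-(k * s)) * ∫ t in Iic s, Real.exp (k * t) * G t, fun s => ?_,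
    fun s => ?_⟩
  · have h1 : HasDerivAt (fun x : ℝ => -(k * x)) (-k) s :=
      ((hasDerivAt_id s).const_mul k).neg.congr_deriv (by simp)
    have h2 := hasDerivAt_integral_Iic (f := fun t => Real.exp (k * t) * G t) (by fun_prop) hint s
    refine (h1.exp.mul h2).congr_deriv ?_
    have : Real.exp (-(k * s)) * Real.exp (k * s) = 1 := by rw [← Real.exp_add]; simp
    linear_combination (G s) * this
  · have h1 : |∫ t in Iic s, Real.exp (k * t) * G t| ≤ ∫ t in Iic s, Real.exp (k * t) * C := by
      rw [← Real.norm_eq_abs]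
      refine norm_integral_le_of_norm_le ((hexp s).mul_const C) (Eventually.of_forall fun t => ?_)
      rw [norm_mul, Real.norm_eq_abs, Real.norm_eq_abs, Real.abs_exp]
      exact mul_le_mul_of_nonneg_left (hC t) (Real.exp_pos _).le
    rw [integral_mul_const, integral_exp_mul_Iic hk] at h1
    rw [abs_mul, Real.abs_exp]
    refine (mul_le_mul_of_nonneg_left h1 (Real.exp_pos _).le).trans (le_of_eq ?_)
    have : Real.exp (-(k * s)) * Real.exp (k * s) = 1 := by rw [← Real.exp_add]; simp
    field_simp
    linear_combination C * this

theorem exists_bounded_solution_deriv2 {G : ℝ → ℝ} {k C : ℝ} (hk : 0 < k) (hG : Continuous G)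
    (hC : ∀ s, |G s| ≤ C) :
    ∃ (v v' : ℝ → ℝ) (D : ℝ), (∀ s, HasDerivAt v (v' s) s) ∧
      (∀ s, HasDerivAt v' (k ^ 2 * v s - G s) s) ∧ (∀ s, |v s| ≤ D) ∧ ∀ s, |v' s| ≤ D := by
  obtain ⟨w, hw, hwC⟩ := exists_bounded_solution_deriv_add (G := fun s => G (-s)) hk (by fun_prop)
    (fun s => hC (-s))
  have hu : ∀ s, HasDerivAt (fun s => w (-s)) (k * w (-s) - G s) s := by
    intro s
    have h1 := (hw (-s)).scomp s (hasDerivAt_neg s)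
    simpa [Function.comp_def] using h1
  have hcont : Continuous fun s => w (-s) :=
    continuous_iff_continuousAt.2 fun s => (hu s).continuousAt
  obtain ⟨v, hv, hvC⟩ := exists_bounded_solution_deriv_add hk hcont (fun s => hwC (-s))
  have hC0 : 0 ≤ C := (abs_nonneg _).trans (hC 0)
  refine ⟨v, fun s => w (-s) - k * v s, C / k / k + C / k + C / k, hv, fun s => ?_, fun s => ?_,
    fun s => ?_⟩
  · exact ((hu s).sub ((hv s).const_mul k)).congr_deriv (by ring)
  · have : 0 ≤ C / k := by positivity
    linarith [hvC s]
  · have h1 : |k * v s| ≤ C / k := by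
      rw [abs_mul, abs_of_pos hk]
      calc k * |v s| ≤ k * (C / k / k) := mul_le_mul_of_nonneg_left (hvC s) hk.le
        _ = C / k := by field_simp
    have h2 : 0 ≤ C / k / k := by positivity
    linarith [abs_sub (w (-s)) (k * v s), hwC (-s)]

/-- Positive zero-order term: if `φ > 0` satisfies `φ'' = V φ`, then for every `l > 0` and every
bounded continuous `γ` the equation `R'' = (V + l) R + φ γ` has a bounded solution. -/
theorem exists_bounded_solution_of_pos {φ φ' V : ℝ → ℝ} {B l : ℝ}
    (hφ : ∀ s, HasDerivAt φ (φ' s) s) (hφ' : ∀ s, HasDerivAt φ' (V s * φ s) s)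
    (hpos : ∀ s, 0 < φ s) (hB : ∀ s, φ s ≤ B) (hB' : ∀ s, |φ' s| ≤ B)
    (hV : Continuous V) (hVB : ∀ s, |V s| ≤ B) (hl : 0 < l) (γ : ℝ →ᵇ ℝ) :
    ∃ (R R' : ℝ → ℝ) (C : ℝ), (∀ s, HasDerivAt R (R' s) s) ∧
      (∀ s, HasDerivAt R' ((V s + l) * R s + φ s * γ s) s) ∧
      (∀ s, |R s| ≤ C) ∧ ∀ s, |R' s| ≤ C := by
  have hB0 : 0 ≤ B := (abs_nonneg _).trans (hVB 0)
  have hφc : Continuous φ := continuous_iff_continuousAt.2 fun s => (hφ s).continuousAt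
  obtain ⟨k, hk, hk2⟩ : ∃ k : ℝ, 0 < k ∧ k ^ 2 = B + l + 1 :=
    ⟨Real.sqrt (B + l + 1), Real.sqrt_pos.2 (by linarith), Real.sq_sqrt (by linarith)⟩
  have hlow : ∀ s, 1 + l ≤ k ^ 2 - V s := fun s => by linarith [(abs_le.1 (hVB s)).2]
  have hupp : ∀ s, k ^ 2 - V s ≤ 2 * B + l + 1 := fun s => by linarith [(abs_le.1 (hVB s)).1]
  -- comparison with multiples of `φ`
  have hcomp : ∀ {v v' G : ℝ → ℝ} {D c : ℝ}, (∀ s, HasDerivAt v (v' s) s) →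
      (∀ s, HasDerivAt v' (k ^ 2 * v s - G s) s) → (∀ s, |v s| ≤ D) → (∀ s, |v' s| ≤ D) →
      0 ≤ c → (∀ s, G s ≤ c * ((k ^ 2 - V s) * φ s)) → ∀ s, v s ≤ c * φ s := by
    intro v v' G D c hv hv' hD hD' hc hG s
    have key := nonneg_of_deriv2_le_sq_mul (u := fun s => c * φ s - v s)
      (u' := fun s => c * φ' s - v' s) (u'' := fun s => c * (V s * φ s) - (k ^ 2 * v s - G s))
      (C := c * B + D) hk
      (fun s => ((hφ s).const_mul c).sub (hv s)) (fun s => ((hφ' s).const_mul c).sub (hv' s))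
      ?_ ?_ ?_ s
    · linarith
    · intro x
      refine (abs_sub _ _).trans (add_le_add ?_ (hD x))
      rw [abs_mul, abs_of_nonneg hc, abs_of_pos (hpos x)]
      exact mul_le_mul_of_nonneg_left (hB x) hc
    · intro x
      refine (abs_sub _ _).trans (add_le_add ?_ (hD' x))
      rw [abs_mul, abs_of_nonneg hc]
      exact mul_le_mul_of_nonneg_left (hB' x) hc
    · intro x
      linarith [hG x]
  -- the fixed point map
  have hmap : ∀ h : ℝ →ᵇ ℝ, ∃ (h' : ℝ →ᵇ ℝ) (v' : ℝ → ℝ) (D : ℝ),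
      (∀ s, HasDerivAt (fun s => φ s * h' s) (v' s) s) ∧
      (∀ s, HasDerivAt v' (k ^ 2 * (φ s * h' s) - φ s * ((k ^ 2 - V s - l) * h s - γ s)) s) ∧
      (∀ s, |φ s * h' s| ≤ D) ∧ ∀ s, |v' s| ≤ D := by
    intro h
    set c : ℝ := (2 * B + l + 1) * ‖h‖ + ‖γ‖ with hc
    have hc0 : 0 ≤ c := by positivity
    have hb : ∀ s, |(k ^ 2 - V s - l) * h s - γ s| ≤ c := by
      intro s
      refine (abs_sub _ _).trans (add_le_add ?_ (γ.norm_coe_le_norm s))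
      rw [abs_mul, abs_of_nonneg (by linarith [hlow s])]
      exact mul_le_mul (by linarith [hupp s]) (h.norm_coe_le_norm s) (abs_nonneg _) (by positivity)
    have hGb : ∀ s, |φ s * ((k ^ 2 - V s - l) * h s - γ s)| ≤ c * φ s := by
      intro s
      rw [abs_mul, abs_of_pos (hpos s), mul_comm]
      exact mul_le_mul_of_nonneg_right (hb s) (hpos s).le
    have hGb' : ∀ s, c * φ s ≤ c * ((k ^ 2 - V s) * φ s) := fun s =>
      mul_le_mul_of_nonneg_left (by nlinarith [hlow s, hpos s]) hc0
    obtain ⟨v, v', D, hv, hv', hD, hD'⟩ := exists_bounded_solution_deriv2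
      (G := fun s => φ s * ((k ^ 2 - V s - l) * h s - γ s)) (C := c * B) hk
      (by have := h.continuous; have := γ.continuous; fun_prop)
      (fun s => (hGb s).trans (mul_le_mul_of_nonneg_left (hB s) hc0))
    have hup := hcomp hv hv' hD hD' hc0 fun s => (le_abs_self _).trans ((hGb s).trans (hGb' s))
    have hdn := hcomp (v := fun s => -v s) (v' := fun s => -v' s)
      (G := fun s => -(φ s * ((k ^ 2 - V s - l) * h s - γ s))) (fun s => (hv s).neg)
      (fun s => (hv' s).neg.congr_deriv (by ring)) (fun s => by rw [abs_neg]; exact hD s)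
      (fun s => by rw [abs_neg]; exact hD' s) hc0
      fun s => (neg_le_abs _).trans ((hGb s).trans (hGb' s))
    have hvc : Continuous v := continuous_iff_continuousAt.2 fun s => (hv s).continuousAt
    have hvφ : ∀ s, φ s * (v s / φ s) = v s := fun s => mul_div_cancel₀ _ (hpos s).ne'
    refine ⟨BoundedContinuousFunction.ofNormedAddCommGroup (fun s => v s / φ s)
      (hvc.div hφc fun s => (hpos s).ne') c fun s => ?_, v', D, ?_⟩
    · rw [Real.norm_eq_abs, abs_div, abs_of_pos (hpos s), div_le_iff₀ (hpos s), abs_le]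
      exact ⟨by linarith [hdn s], hup s⟩
    · simp only [BoundedContinuousFunction.coe_ofNormedAddCommGroup, hvφ]
      exact ⟨hv, hv', hD, hD'⟩
  choose T T' D hT hT' hTD hTD' using hmap
  have hden : 0 < 2 * B + l + 1 := by linarith
  set ρ : ℝ := 1 - l / (2 * B + l + 1) with hρ
  have hρ0 : 0 ≤ ρ := by
    rw [hρ, sub_nonneg, div_le_one hden]
    linarith
  have hρ1 : ρ < 1 := by
    have : 0 < l / (2 * B + l + 1) := div_pos hl hden
    linarith
  have hone : ∀ h₁ h₂ : ℝ →ᵇ ℝ, ∀ s, T h₁ s - T h₂ s ≤ ρ * dist h₁ h₂ := by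
    intro h₁ h₂ s
    have key := hcomp (v := fun s => φ s * T h₁ s - φ s * T h₂ s) (v' := fun s => T' h₁ s - T' h₂ s)
      (G := fun s => φ s * ((k ^ 2 - V s - l) * (h₁ s - h₂ s))) (D := D h₁ + D h₂)
      (c := ρ * dist h₁ h₂)
      (fun s => (hT h₁ s).sub (hT h₂ s))
      (fun s => ((hT' h₁ s).sub (hT' h₂ s)).congr_deriv (by ring))
      (fun s => (abs_sub _ _).trans (add_le_add (hTD h₁ s) (hTD h₂ s)))
      (fun s => (abs_sub _ _).trans (add_le_add (hTD' h₁ s) (hTD' h₂ s)))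
      (mul_nonneg hρ0 dist_nonneg) ?_ s
    · have h1 := hpos s
      refine le_of_mul_le_mul_left ?_ h1
      linarith
    · intro x
      have h1 : h₁ x - h₂ x ≤ dist h₁ h₂ :=
        (le_abs_self _).trans (BoundedContinuousFunction.dist_coe_le_dist (f := h₁) (g := h₂) x)
      have h2 : (k ^ 2 - V x - l) ≤ ρ * (k ^ 2 - V x) := by
        have h3 : l / (2 * B + l + 1) * (k ^ 2 - V x) ≤ l := by
          rw [div_mul_eq_mul_div, div_le_iff₀ hden]
          exact mul_le_mul_of_nonneg_left (hupp x) hl.le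
        rw [hρ]
        linarith
      calc φ x * ((k ^ 2 - V x - l) * (h₁ x - h₂ x))
          ≤ φ x * ((k ^ 2 - V x - l) * dist h₁ h₂) := by
            refine mul_le_mul_of_nonneg_left (mul_le_mul_of_nonneg_left h1 ?_) (hpos x).le
            linarith [hlow x]
        _ ≤ φ x * (ρ * (k ^ 2 - V x) * dist h₁ h₂) :=
            mul_le_mul_of_nonneg_left (mul_le_mul_of_nonneg_right h2 dist_nonneg) (hpos x).le
        _ = _ := by ring
  have hcontr : ContractingWith ⟨ρ, hρ0⟩ T := by
    refine ⟨by exact_mod_cast hρ1, LipschitzWith.of_dist_le_mul fun h₁ h₂ => ?_⟩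
    refine (BoundedContinuousFunction.dist_le (mul_nonneg hρ0 dist_nonneg)).2 fun s => ?_
    rw [Real.dist_eq, abs_le]
    refine ⟨?_, hone h₁ h₂ s⟩
    have := hone h₂ h₁ s
    rw [dist_comm] at this
    change -(ρ * dist h₁ h₂) ≤ _
    linarith
  have hfix : T (ContractingWith.fixedPoint T hcontr) = ContractingWith.fixedPoint T hcontr :=
    hcontr.fixedPoint_isFixedPt
  set h := ContractingWith.fixedPoint T hcontr
  refine ⟨fun s => φ s * h s, T' h, D h, ?_, ?_, ?_, hTD' h⟩
  · simpa only [hfix] using hT h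
  · intro s
    have := hT' h s
    rw [hfix] at this
    exact this.congr_deriv (by ring)
  · simpa only [hfix] using hTD h

/-- Landau-type bound: a function with `|u| ≤ A` and `|u''| ≤ B` has `|u'| ≤ 2 A + B`. -/
theorem abs_deriv_le_of_abs_le {u u' u'' : ℝ → ℝ} {A B : ℝ}
    (hu : ∀ s, HasDerivAt u (u' s) s) (hu' : ∀ s, HasDerivAt u' (u'' s) s)
    (hA : ∀ s, |u s| ≤ A) (hB : ∀ s, |u'' s| ≤ B) (s : ℝ) : |u' s| ≤ 2 * A + B := by
  obtain ⟨x, hx, hx'⟩ := exists_hasDerivAt_eq_slope u u' (lt_add_one s)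
    (fun x _ => (hu x).continuousAt.continuousWithinAt) fun x _ => hu x
  have h1 : |u' s - u' x| ≤ B * |s - x| := by
    simpa using Convex.norm_image_sub_le_of_norm_hasDerivWithin_le (f := u') (f' := u'')
      (fun y _ => (hu' y).hasDerivWithinAt) (fun y _ => hB y) convex_univ (mem_univ x) (mem_univ s)
  have hB0 : 0 ≤ B := (abs_nonneg _).trans (hB 0)
  have h2 : |s - x| ≤ 1 := by
    rw [abs_le]
    constructor <;> linarith [hx.1, hx.2]
  have h3 : |u' x| ≤ 2 * A := by
    rw [hx', add_sub_cancel_left, div_one]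
    linarith [abs_sub (u (s + 1)) (u s), hA s, hA (s + 1)]
  have h4 : |u' s| ≤ |u' s - u' x| + |u' x| := by
    simpa using abs_add_le (u' s - u' x) (u' x)
  nlinarith

theorem le_of_monotoneOn_of_tendsto_atBot {f : ℝ → ℝ} {a l : ℝ} (hf : MonotoneOn f (Iic a))
    (hl : Tendsto f atBot (𝓝 l)) {s : ℝ} (hs : s ≤ a) : l ≤ f s :=
  le_of_tendsto hl ((eventually_le_atBot s).mono fun _ ht => hf (ht.trans hs) hs ht)

theorem monotoneOn_Iic_of_hasDerivAt_nonneg {f f' : ℝ → ℝ} {a : ℝ}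
    (hf : ∀ s, HasDerivAt f (f' s) s) (h : ∀ s ≤ a, 0 ≤ f' s) : MonotoneOn f (Iic a) := by
  refine monotoneOn_of_deriv_nonneg (convex_Iic a)
    (fun x _ => (hf x).continuousAt.continuousWithinAt)
    (fun x _ => (hf x).differentiableAt.differentiableWithinAt) fun x hx => ?_
  rw [(hf x).deriv]
  have hx' : x ∈ Iic a := interior_subset hx
  exact h x hx'

/-- Consequences of exponential decay at `-∞`. -/
theorem exists_bound_of_decay_atBot {φ φ' J g : ℝ → ℝ} {B S μ c : ℝ}
    (hφ : ∀ s, HasDerivAt φ (φ' s) s) (hpos : ∀ s, 0 < φ s) (hB : ∀ s, φ s ≤ B)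
    (hS : 0 ≤ S) (hμ : 0 < μ)
    (hdec : ∀ s ≤ -S, μ * φ s ≤ φ' s) (hlim : Tendsto φ atBot (𝓝 0))
    (hJ : ∀ s, HasDerivAt J (g s * φ s ^ 2) s) (hg : ∀ s, |g s| ≤ c)
    (hJlim : Tendsto J atBot (𝓝 0)) :
    ∃ C, ∀ s ≤ 0, |J s| ≤ C * φ s ^ 2 ∧ |s| * φ s ≤ C := by
  have hφc : Continuous φ := continuous_iff_continuousAt.2 fun s => (hφ s).continuousAt
  have hJc : Continuous J := continuous_iff_continuousAt.2 fun s => (hJ s).continuousAt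
  have hB0 : 0 ≤ B := (hpos 0).le.trans (hB 0)
  have hc0 : 0 ≤ c := (abs_nonneg _).trans (hg 0)
  have hJle : ∀ {K h : ℝ → ℝ}, (∀ s, HasDerivAt K (h s * φ s ^ 2) s) → (∀ s, h s ≤ c) →
      Tendsto K atBot (𝓝 0) → ∀ s ≤ -S, K s ≤ c / (2 * μ) * φ s ^ 2 := by
    intro K h hK hh hKlim s hs
    have hm : MonotoneOn (fun s => c / (2 * μ) * φ s ^ 2 - K s) (Iic (-S)) := by
      refine monotoneOn_Iic_of_hasDerivAt_nonneg
        (fun x => (((hφ x).pow 2).const_mul (c / (2 * μ))).sub (hK x)) fun x hx => ?_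
      have h1 : c / (2 * μ) * (2 * φ x * (μ * φ x)) ≤ c / (2 * μ) * (2 * φ x * φ' x) :=
        mul_le_mul_of_nonneg_left (mul_le_mul_of_nonneg_left (hdec x hx)
          (by linarith [hpos x])) (by positivity)
      have h2 : c / (2 * μ) * (2 * φ x * (μ * φ x)) = c * φ x ^ 2 := by field_simp
      have h3 : h x * φ x ^ 2 ≤ c * φ x ^ 2 := mul_le_mul_of_nonneg_right (hh x) (sq_nonneg _)
      norm_num
      linarith
    have hl : Tendsto (fun s => c / (2 * μ) * φ s ^ 2 - K s) atBot (𝓝 0) := by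
      simpa using ((hlim.pow 2).const_mul (c / (2 * μ))).sub hKlim
    have := le_of_monotoneOn_of_tendsto_atBot hm hl hs
    linarith
  have hJabs : ∀ s ≤ -S, |J s| ≤ c / (2 * μ) * φ s ^ 2 := by
    intro s hs
    refine abs_le'.2 ⟨hJle hJ (fun s => (le_abs_self _).trans (hg s)) hJlim s hs, ?_⟩
    refine hJle (K := fun s => -J s) (h := fun s => -g s)
      (fun s => (hJ s).neg.congr_deriv (by ring)) (fun s => (neg_le_abs _).trans (hg s))
      (by simpa using hJlim.neg) s hs
  obtain ⟨C₁, hC₁⟩ := (isCompact_Icc (a := -S) (b := 0)).exists_bound_of_continuousOn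
    (f := fun s => J s / φ s ^ 2)
    (hJc.div (hφc.pow 2) fun s => (pow_pos (hpos s) 2).ne').continuousOn
  set a := max S (1 / μ) with ha
  have ha0 : 0 ≤ a := hS.trans (le_max_left _ _)
  refine ⟨max (max (c / (2 * μ)) C₁) (a * B), fun s hs => ⟨?_, ?_⟩⟩
  · have hp := pow_pos (hpos s) 2
    rcases le_total s (-S) with h | h
    · exact (hJabs s h).trans (mul_le_mul_of_nonneg_right
        ((le_max_left _ _).trans (le_max_left _ _)) hp.le)
    · have := hC₁ s ⟨h, hs⟩
      rw [Real.norm_eq_abs, abs_div, abs_of_pos hp, div_le_iff₀ hp] at this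
      exact this.trans (mul_le_mul_of_nonneg_right
        ((le_max_right _ _).trans (le_max_left _ _)) hp.le)
  · refine le_trans ?_ (le_max_right _ _)
    rw [abs_of_nonpos hs]
    rcases le_total s (-a) with h | h
    · have hm : MonotoneOn (fun s => -s * φ s) (Iic (-a)) := by
        refine monotoneOn_Iic_of_hasDerivAt_nonneg
          (fun x => (hasDerivAt_id x).neg.mul (hφ x)) fun x hx => ?_
        have h1 : x ≤ -S := hx.trans (neg_le_neg (le_max_left _ _))
        have h2 : 1 / μ ≤ -x := by linarith [le_max_right S (1 / μ)]
        have h3 : 1 ≤ -x * μ := by rwa [div_le_iff₀ hμ] at h2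
        have h4 : 0 ≤ -x := by linarith
        have h5 := mul_le_mul_of_nonneg_left (hdec x h1) h4
        have h6 := mul_le_mul_of_nonneg_right h3 (hpos x).le
        simp only [Pi.neg_apply, id]
        nlinarith
      have h1 := hm h self_mem_Iic h
      simp only [neg_neg] at h1
      exact h1.trans (mul_le_mul_of_nonneg_left (hB _) ha0)
    · exact mul_le_mul (by linarith) (hB s) (hpos s).le ha0

/-- The solvable case without zero-order term, by reduction of order. -/
theorem exists_bounded_solution_of_integral_eq_zero {φ φ' V : ℝ → ℝ} {B S μ : ℝ}
    (hφ : ∀ s, HasDerivAt φ (φ' s) s) (hφ' : ∀ s, HasDerivAt φ' (V s * φ s) s)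
    (hpos : ∀ s, 0 < φ s) (hB : ∀ s, φ s ≤ B) (hVB : ∀ s, |V s| ≤ B)
    (hS : 0 ≤ S) (hμ : 0 < μ)
    (hbot : ∀ s ≤ -S, μ * φ s ≤ φ' s) (hlimbot : Tendsto φ atBot (𝓝 0))
    (htop : ∀ s, S ≤ s → φ' s ≤ -(μ * φ s)) (hlimtop : Tendsto φ atTop (𝓝 0))
    (hint : Integrable fun s => φ s ^ 2) (γ : ℝ →ᵇ ℝ) (hγ : ∫ s, γ s * φ s ^ 2 = 0) :
    ∃ (R R' : ℝ → ℝ) (C : ℝ), (∀ s, HasDerivAt R (R' s) s) ∧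
      (∀ s, HasDerivAt R' (V s * R s + φ s * γ s) s) ∧
      (∀ s, |R s| ≤ C) ∧ ∀ s, |R' s| ≤ C := by
  have hφc : Continuous φ := continuous_iff_continuousAt.2 fun s => (hφ s).continuousAt
  have hB0 : 0 ≤ B := (hpos 0).le.trans (hB 0)
  have hint' : Integrable fun s => γ s * φ s ^ 2 :=
    hint.bdd_mul γ.continuous.aestronglyMeasurable
      (Eventually.of_forall fun s => γ.norm_coe_le_norm s)
  have hsplit : ∀ s, (∫ t in Iic s, γ t * φ t ^ 2)
      = (∫ t in Iic 0, γ t * φ t ^ 2) + ∫ t in (0:ℝ)..s, γ t * φ t ^ 2 := by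
    intro s
    rw [← intervalIntegral.integral_Iic_sub_Iic hint'.integrableOn hint'.integrableOn]
    ring
  obtain ⟨J, hJ, hJbot, hJtop⟩ : ∃ J : ℝ → ℝ, (∀ s, HasDerivAt J (γ s * φ s ^ 2) s) ∧
      Tendsto J atBot (𝓝 0) ∧ Tendsto J atTop (𝓝 0) := by
    refine ⟨fun s => ∫ t in Iic s, γ t * φ t ^ 2, hasDerivAt_integral_Iic
      (by have := γ.continuous; fun_prop) fun s => hint'.integrableOn, ?_, ?_⟩
    · rw [funext hsplit]
      have h1 := intervalIntegral_tendsto_integral_Iic (μ := volume) (0:ℝ)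
        (hint'.integrableOn (s := Iic 0)) tendsto_id
      have h2 := (h1.neg).const_add (∫ t in Iic 0, γ t * φ t ^ 2)
      simpa [← intervalIntegral.integral_symm] using h2
    · rw [funext hsplit]
      have h1 := intervalIntegral_tendsto_integral_Ioi (μ := volume) (0:ℝ)
        (hint'.integrableOn (s := Ioi 0)) tendsto_id
      have h2 := h1.const_add (∫ t in Iic 0, γ t * φ t ^ 2)
      rwa [intervalIntegral.integral_Iic_add_Ioi hint'.integrableOn hint'.integrableOn, hγ] at h2
  obtain ⟨C₁, hC₁⟩ := exists_bound_of_decay_atBot hφ hpos hB hS hμ hbot hlimbot hJ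
    (fun s => γ.norm_coe_le_norm s) hJbot
  have hrefl : ∀ {f f' : ℝ → ℝ}, (∀ s, HasDerivAt f (f' s) s) → ∀ s,
      HasDerivAt (fun s => f (-s)) (-f' (-s)) s := by
    intro f f' hf s
    simpa [Function.comp_def] using (hf (-s)).scomp s (hasDerivAt_neg s)
  obtain ⟨C₂, hC₂⟩ := exists_bound_of_decay_atBot (φ := fun s => φ (-s)) (φ' := fun s => -φ' (-s))
    (J := fun s => J (-s)) (g := fun s => -γ (-s)) (c := ‖γ‖) (hrefl hφ) (fun s => hpos _)
    (fun s => hB _) hS hμ (fun s hs => by linarith [htop (-s) (by linarith)])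
    (hlimtop.comp tendsto_neg_atBot_atTop) (fun s => (hrefl hJ s).congr_deriv (by ring))
    (fun s => by rw [abs_neg]; exact γ.norm_coe_le_norm _) (hJtop.comp tendsto_neg_atBot_atTop)
  obtain ⟨C, hC⟩ : ∃ C, ∀ s, |J s| ≤ C * φ s ^ 2 ∧ |s| * φ s ≤ C := by
    refine ⟨max C₁ C₂, fun s => ?_⟩
    have hp := pow_pos (hpos s) 2
    rcases le_total s 0 with h | h
    · exact ⟨(hC₁ s h).1.trans (mul_le_mul_of_nonneg_right (le_max_left _ _) hp.le),
        (hC₁ s h).2.trans (le_max_left _ _)⟩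
    · have := hC₂ (-s) (by linarith)
      simp only [neg_neg, abs_neg] at this
      exact ⟨this.1.trans (mul_le_mul_of_nonneg_right (le_max_right _ _) hp.le),
        this.2.trans (le_max_right _ _)⟩
  have hJc : Continuous J := continuous_iff_continuousAt.2 fun s => (hJ s).continuousAt
  have hqc : Continuous fun s => J s / φ s ^ 2 :=
    hJc.div (hφc.pow 2) fun s => (pow_pos (hpos s) 2).ne'
  set h : ℝ → ℝ := fun s => ∫ t in (0:ℝ)..s, J t / φ t ^ 2 with hh
  have hd : ∀ s, HasDerivAt h (J s / φ s ^ 2) s := fun s =>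
    (hqc.integral_hasStrictDerivAt 0 s).hasDerivAt
  have hC0 : 0 ≤ C := by simpa using (hC 0).2
  have hhb : ∀ s, |h s| ≤ C * |s| := by
    intro s
    have := intervalIntegral.norm_integral_le_of_norm_le_const (a := (0:ℝ)) (b := s) (C := C)
      (f := fun t => J t / φ t ^ 2) fun t _ => by
        rw [Real.norm_eq_abs, abs_div, abs_of_pos (pow_pos (hpos t) 2),
          div_le_iff₀ (pow_pos (hpos t) 2)]
        exact (hC t).1
    simpa using this
  have hR : ∀ s, HasDerivAt (fun s => φ s * h s) (φ' s * h s + J s / φ s) s := by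
    intro s
    refine ((hφ s).mul (hd s)).congr_deriv ?_
    have := (hpos s).ne'
    field_simp
  have hR' : ∀ s, HasDerivAt (fun s => φ' s * h s + J s / φ s)
      (V s * (φ s * h s) + φ s * γ s) s := by
    intro s
    refine (((hφ' s).mul (hd s)).add ((hJ s).div (hφ s) (hpos s).ne')).congr_deriv ?_
    have := (hpos s).ne'
    field_simp
    ring
  have hRb : ∀ s, |φ s * h s| ≤ C * C := by
    intro s
    rw [abs_mul, abs_of_pos (hpos s)]
    calc φ s * |h s| ≤ φ s * (C * |s|) := mul_le_mul_of_nonneg_left (hhb s) (hpos s).le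
      _ = C * (|s| * φ s) := by ring
      _ ≤ C * C := mul_le_mul_of_nonneg_left (hC s).2 hC0
  have hR'' : ∀ s, |V s * (φ s * h s) + φ s * γ s| ≤ B * (C * C) + B * ‖γ‖ := by
    intro s
    refine (abs_add_le _ _).trans (add_le_add ?_ ?_)
    · rw [abs_mul]
      exact mul_le_mul (hVB s) (hRb s) (abs_nonneg _) hB0
    · rw [abs_mul, abs_of_pos (hpos s)]
      exact mul_le_mul (hB s) (γ.norm_coe_le_norm s) (abs_nonneg _) hB0
  refine ⟨_, _, 2 * (C * C) + (B * (C * C) + B * ‖γ‖), hR, hR', fun s => ?_,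
    abs_deriv_le_of_abs_le hR hR' hRb hR''⟩
  have : 0 ≤ B * (C * C) + B * ‖γ‖ := by positivity
  nlinarith [hRb s]

theorem StandingWave.hasDerivAt {W q : ℝ → ℝ} (hq : StandingWave W q) (s : ℝ) :
    HasDerivAt q (deriv q s) s :=
  (hq.1.differentiable (by norm_num) s).hasDerivAt

theorem StandingWave.hasDerivAt_deriv {W q : ℝ → ℝ} (hq : StandingWave W q) (s : ℝ) :
    HasDerivAt (deriv q) (deriv W (q s)) s := by
  have h : ContDiff ℝ 1 (deriv q) := (contDiff_succ_iff_deriv (n := 1).1 hq.1).2.2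
  rw [← hq.2.2.2.2.1 s]
  exact (h.differentiable (by norm_num) s).hasDerivAt

theorem DoubleWell.contDiff_deriv {W : ℝ → ℝ} (hW : DoubleWell W) : ContDiff ℝ 2 (deriv W) :=
  (contDiff_succ_iff_deriv (n := 2).1 hW.1).2.2

theorem DoubleWell.continuous_deriv2 {W : ℝ → ℝ} (hW : DoubleWell W) :
    Continuous (deriv (deriv W)) :=
  (contDiff_succ_iff_deriv (n := 1).1 hW.contDiff_deriv).2.2.continuous

theorem StandingWave.hasDerivAt_deriv2 {W q : ℝ → ℝ} (hW : DoubleWell W) (hq : StandingWave W q)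
    (s : ℝ) : HasDerivAt (fun s => deriv W (q s)) (deriv (deriv W) (q s) * deriv q s) s :=
  (hW.contDiff_deriv.differentiable (by norm_num) (q s)).hasDerivAt.comp s (hq.hasDerivAt s)

theorem DoubleWell.reflect {W : ℝ → ℝ} (hW : DoubleWell W) : DoubleWell fun u => W (-u) := by
  obtain ⟨h1, h2, h3, h4, h5, h6, h7, h8, h9, h10, h11, h12, h13⟩ := hW
  have hd : deriv (fun u => W (-u)) = fun u => -deriv W (-u) := funext fun u => deriv_comp_neg W u
  have hd2 : deriv (deriv fun u => W (-u)) = fun u => deriv (deriv W) (-u) := by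
    rw [hd]
    funext u
    rw [deriv.fun_neg, deriv_comp_neg, neg_neg]
  refine ⟨by fun_prop, fun u hu => h2 _ ?_, by simpa, by simpa, fun u hu => h5 _ ?_, ?_, ?_, ?_,
    fun u hu => ?_, fun u hu => ?_, ?_, ?_, ?_⟩
  · exact ⟨by linarith [hu.2], by linarith [hu.1]⟩
  · exact ⟨by linarith [hu.2], by linarith [hu.1]⟩
  · simpa [hd]
  · simpa [hd]
  · simpa [hd]
  · have := h10 (-u) ⟨by linarith [hu.2], by linarith [hu.1]⟩
    rw [hd]
    simpa
  · have := h9 (-u) ⟨by linarith [hu.2], by linarith [hu.1]⟩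
    rw [hd]
    simpa
  · simpa [hd2]
  · simpa [hd2]
  · simpa [hd2]

theorem StandingWave.deriv_reflect (q : ℝ → ℝ) :
    deriv (fun s => -q (-s)) = fun s => deriv q (-s) := by
  funext s
  rw [deriv.fun_neg, deriv_comp_neg, neg_neg]

theorem StandingWave.reflect {W q : ℝ → ℝ} (hq : StandingWave W q) :
    StandingWave (fun u => W (-u)) fun s => -q (-s) := by
  obtain ⟨h1, h2, h3, h4, h5, h6, h7⟩ := hq
  refine ⟨by fun_prop, fun a b hab => neg_lt_neg (h2 (neg_lt_neg hab)), fun s => ?_, by simpa,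
    fun s => ?_, ?_, ?_⟩
  · exact ⟨by linarith [(h3 (-s)).2], by linarith [(h3 (-s)).1]⟩
  · rw [StandingWave.deriv_reflect, deriv_comp_neg, h5, deriv_comp_neg, neg_neg]
  · simpa using (h7.comp tendsto_neg_atTop_atBot).neg
  · simpa using (h6.comp tendsto_neg_atBot_atTop).neg

theorem StandingWave.deriv_nonneg {W q : ℝ → ℝ} (hq : StandingWave W q) (s : ℝ) : 0 ≤ deriv q s :=
  hq.2.1.monotone.deriv_nonneg

theorem StandingWave.strictMonoOn_deriv {W q : ℝ → ℝ} (hW : DoubleWell W) (hq : StandingWave W q) :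
    StrictMonoOn (deriv q) (Iic 0) := by
  refine strictMonoOn_of_deriv_pos (convex_Iic 0)
    (fun x _ => (hq.hasDerivAt_deriv x).continuousAt.continuousWithinAt) fun x hx => ?_
  rw [interior_Iic] at hx
  rw [hq.2.2.2.2.1]
  refine hW.2.2.2.2.2.2.2.2.1 _ ⟨(hq.2.2.1 x).1, ?_⟩
  rw [← hq.2.2.2.1]
  exact hq.2.1 hx

theorem StandingWave.deriv_pos {W q : ℝ → ℝ} (hW : DoubleWell W) (hq : StandingWave W q) (s : ℝ) :
    0 < deriv q s := by
  have key : ∀ {W q : ℝ → ℝ}, DoubleWell W → StandingWave W q → ∀ s ≤ 0, 0 < deriv q s :=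
    fun hW hq s hs => (hq.deriv_nonneg (s - 1)).trans_lt
      (hq.strictMonoOn_deriv hW (mem_Iic.2 (by linarith)) hs (by linarith))
  rcases le_total s 0 with h | h
  · exact key hW hq s h
  · have := key hW.reflect hq.reflect (-s) (by linarith)
    rw [StandingWave.deriv_reflect] at this
    simpa only [neg_neg] using this

theorem StandingWave.tendsto_deriv_atBot {W q : ℝ → ℝ} (hW : DoubleWell W)
    (hq : StandingWave W q) : Tendsto (deriv q) atBot (𝓝 0) := by
  have h1 : Tendsto (fun s => q (s + 1) - q s) atBot (𝓝 0) := by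
    simpa using (hq.2.2.2.2.2.2.comp (tendsto_atBot_add_const_right _ 1 tendsto_id)).sub
      hq.2.2.2.2.2.2
  refine tendsto_of_tendsto_of_tendsto_of_le_of_le' tendsto_const_nhds h1
    (Eventually.of_forall hq.deriv_nonneg) ((eventually_le_atBot (-1)).mono fun s hs => ?_)
  obtain ⟨x, hx, hx'⟩ := exists_hasDerivAt_eq_slope q (deriv q) (lt_add_one s)
    (fun x _ => (hq.hasDerivAt x).continuousAt.continuousWithinAt) fun x _ => hq.hasDerivAt x
  rw [add_sub_cancel_left, div_one] at hx'
  change deriv q s ≤ q (s + 1) - q s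
  rw [← hx']
  exact (hq.strictMonoOn_deriv hW).monotoneOn (mem_Iic.2 (by linarith))
    (mem_Iic.2 (by linarith [hx.2])) hx.1.le

theorem StandingWave.exists_decay_atBot {W q : ℝ → ℝ} (hW : DoubleWell W)
    (hq : StandingWave W q) : ∃ μ S : ℝ, 0 < μ ∧ 0 ≤ S ∧
      ∀ s ≤ -S, μ * deriv q s ≤ deriv W (q s) := by
  have hpos : 0 < deriv (deriv W) (-1) := hW.2.2.2.2.2.2.2.2.2.2.1
  have hqbot := hq.2.2.2.2.2.2
  have hV : Tendsto (fun s => deriv (deriv W) (q s)) atBot (𝓝 (deriv (deriv W) (-1))) :=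
    (hW.continuous_deriv2.tendsto _).comp hqbot
  obtain ⟨a, ha⟩ := eventually_atBot.1 (hV.eventually_const_le (half_lt_self hpos))
  set μ := Real.sqrt (deriv (deriv W) (-1) / 2) with hμ
  have hμ2 : μ ^ 2 = deriv (deriv W) (-1) / 2 := Real.sq_sqrt (by linarith)
  have hμ0 : 0 < μ := Real.sqrt_pos.2 (by linarith)
  refine ⟨μ, |a|, hμ0, abs_nonneg a, fun s hs => ?_⟩
  have hW' : ∀ x ≤ -|a|, 0 ≤ deriv W (q x) := by
    intro x hx
    rw [← hq.2.2.2.2.1]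
    have hx0 : q x ≤ 0 := by
      rw [← hq.2.2.2.1]
      exact hq.2.1.monotone (hx.trans (by simp))
    rcases hx0.lt_or_eq with h | h
    · rw [hq.2.2.2.2.1]
      exact (hW.2.2.2.2.2.2.2.2.1 _ ⟨(hq.2.2.1 x).1, h⟩).le
    · rw [hq.2.2.2.2.1, h, hW.2.2.2.2.2.2.1]
  have hm : MonotoneOn (fun s => deriv W (q s) ^ 2 - μ ^ 2 * deriv q s ^ 2) (Iic (-|a|)) := by
    refine monotoneOn_Iic_of_hasDerivAt_nonneg (fun x => ((hq.hasDerivAt_deriv2 hW x).pow 2).sub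
      (((hq.hasDerivAt_deriv x).pow 2).const_mul (μ ^ 2))) fun x hx => ?_
    have h1 : 0 ≤ deriv (deriv W) (q x) - μ ^ 2 := by
      rw [hμ2]
      linarith [ha x (hx.trans (neg_abs_le a))]
    have h2 := mul_nonneg (mul_nonneg (hW' x hx) (hq.deriv_nonneg x)) h1
    norm_num
    linarith
  have hl : Tendsto (fun s => deriv W (q s) ^ 2 - μ ^ 2 * deriv q s ^ 2) atBot (𝓝 0) := by
    have h1 : Tendsto (fun s => deriv W (q s)) atBot (𝓝 (deriv W (-1))) :=
      (hW.contDiff_deriv.continuous.tendsto _).comp hqbot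
    rw [hW.2.2.2.2.2.1] at h1
    simpa using (h1.pow 2).sub (((hq.tendsto_deriv_atBot hW).pow 2).const_mul (μ ^ 2))
  have h0 := le_of_monotoneOn_of_tendsto_atBot hm hl hs
  refine le_of_sq_le_sq ?_ (hW' s hs)
  rw [mul_pow]
  linarith

theorem StandingWave.exists_decay {W q : ℝ → ℝ} (hW : DoubleWell W) (hq : StandingWave W q) :
    ∃ μ S : ℝ, 0 < μ ∧ 0 ≤ S ∧ (∀ s ≤ -S, μ * deriv q s ≤ deriv W (q s)) ∧
      ∀ s, S ≤ s → deriv W (q s) ≤ -(μ * deriv q s) := by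
  obtain ⟨μ₁, S₁, hμ₁, hS₁, h₁⟩ := hq.exists_decay_atBot hW
  obtain ⟨μ₂, S₂, hμ₂, hS₂, h₂⟩ := hq.reflect.exists_decay_atBot hW.reflect
  refine ⟨min μ₁ μ₂, max S₁ S₂, lt_min hμ₁ hμ₂, hS₁.trans (le_max_left _ _), fun s hs => ?_,
    fun s hs => ?_⟩
  · exact (mul_le_mul_of_nonneg_right (min_le_left _ _) (hq.deriv_nonneg s)).trans
      (h₁ s (hs.trans (neg_le_neg (le_max_left _ _))))
  · have := h₂ (-s) (neg_le_neg ((le_max_right _ _).trans hs))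
    rw [StandingWave.deriv_reflect, deriv_comp_neg] at this
    simp only [neg_neg] at this
    linarith [mul_le_mul_of_nonneg_right (min_le_right μ₁ μ₂) (hq.deriv_nonneg s)]

theorem StandingWave.tendsto_deriv_atTop {W q : ℝ → ℝ} (hW : DoubleWell W)
    (hq : StandingWave W q) : Tendsto (deriv q) atTop (𝓝 0) := by
  have h := (hq.reflect.tendsto_deriv_atBot hW.reflect).comp tendsto_neg_atTop_atBot
  rw [StandingWave.deriv_reflect] at h
  simpa only [Function.comp_def, neg_neg] using h

theorem StandingWave.exists_bound {W q : ℝ → ℝ} (hW : DoubleWell W) (hq : StandingWave W q) :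
    ∃ B, (∀ s, deriv q s ≤ B) ∧ (∀ s, |deriv W (q s)| ≤ B) ∧ ∀ s, |deriv (deriv W) (q s)| ≤ B := by
  obtain ⟨B₁, hB₁⟩ := (isCompact_Icc (a := (-1:ℝ)) (b := 1)).exists_bound_of_continuousOn
    hW.contDiff_deriv.continuous.continuousOn
  obtain ⟨B₂, hB₂⟩ := (isCompact_Icc (a := (-1:ℝ)) (b := 1)).exists_bound_of_continuousOn
    hW.continuous_deriv2.continuousOn
  have hmem : ∀ s, q s ∈ Icc (-1:ℝ) 1 := fun s => Ioo_subset_Icc_self (hq.2.2.1 s)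
  have h1 := abs_deriv_le_of_abs_le hq.hasDerivAt hq.hasDerivAt_deriv
    (fun s => abs_le.2 (hmem s)) (fun s => hB₁ _ (hmem s))
  refine ⟨max (2 * 1 + B₁) (max B₁ B₂), fun s => ?_, fun s => ?_, fun s => ?_⟩
  · exact ((le_abs_self _).trans (h1 s)).trans (le_max_left _ _)
  · exact (hB₁ _ (hmem s)).trans ((le_max_left _ _).trans (le_max_right _ _))
  · exact (hB₂ _ (hmem s)).trans ((le_max_right _ _).trans (le_max_right _ _))

theorem StandingWave.integrableOn_deriv_Ioi {W q : ℝ → ℝ} (hq : StandingWave W q) :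
    IntegrableOn (deriv q) (Ioi 0) :=
  integrableOn_Ioi_deriv_of_nonneg hq.1.continuous.continuousWithinAt
    (fun x _ => hq.hasDerivAt x) (fun x _ => hq.deriv_nonneg x) hq.2.2.2.2.2.1

theorem StandingWave.continuous_deriv {W q : ℝ → ℝ} (hq : StandingWave W q) :
    Continuous (deriv q) :=
  continuous_iff_continuousAt.2 fun s => (hq.hasDerivAt_deriv s).continuousAt

theorem StandingWave.integrable_deriv_sq {W q : ℝ → ℝ} (hW : DoubleWell W)
    (hq : StandingWave W q) : Integrable fun s => deriv q s ^ 2 := by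
  obtain ⟨B, hB, -⟩ := hq.exists_bound hW
  have h1 : Integrable (deriv q) := by
    rw [← integrableOn_univ, ← Iic_union_Ioi (a := (0:ℝ))]
    refine IntegrableOn.union ?_ hq.integrableOn_deriv_Ioi
    rw [← (Measure.measurePreserving_neg (volume : Measure ℝ)).integrableOn_comp_preimage
      (Homeomorph.neg ℝ).measurableEmbedding]
    have h2 := hq.reflect.integrableOn_deriv_Ioi
    rw [StandingWave.deriv_reflect, ← integrableOn_Ici_iff_integrableOn_Ioi] at h2
    simpa [Function.comp_def] using h2
  simp_rw [sq]
  exact h1.bdd_mul (c := B) hq.continuous_deriv.aestronglyMeasurable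
    (Eventually.of_forall fun s => by rw [Real.norm_of_nonneg (hq.deriv_nonneg s)]; exact hB s)

/-- Twice continuously differentiable with bounded derivatives up to order two. -/
def BddC2 {E : Type*} [NormedAddCommGroup E] [NormedSpace ℝ E] (f : E → ℝ) : Prop :=
  ContDiff ℝ 2 f ∧ ∃ C : ℝ, ∀ n : ℕ, n ≤ 2 → ∀ p, ‖iteratedFDeriv ℝ n f p‖ ≤ C

namespace BddC2

variable {E F : Type*} [NormedAddCommGroup E] [NormedSpace ℝ E] [NormedAddCommGroup F]
  [NormedSpace ℝ F] {f g : E → ℝ}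

theorem of_hasDerivAt {R R' R'' : ℝ → ℝ} {C : ℝ} (h : ∀ s, HasDerivAt R (R' s) s)
    (h' : ∀ s, HasDerivAt R' (R'' s) s) (hc : Continuous R'') (hC : ∀ s, |R s| ≤ C)
    (hC' : ∀ s, |R' s| ≤ C) (hC'' : ∀ s, |R'' s| ≤ C) : BddC2 R := by
  have d1 : deriv R = R' := funext fun s => (h s).deriv
  have d2 : deriv R' = R'' := funext fun s => (h' s).deriv
  refine ⟨?_, C, fun n hn p => ?_⟩
  · rw [show (2 : WithTop ℕ∞) = 1 + 1 by norm_num, contDiff_succ_iff_deriv]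
    refine ⟨fun s => (h s).differentiableAt, by simp, ?_⟩
    rw [d1, contDiff_one_iff_deriv, d2]
    exact ⟨fun s => (h' s).differentiableAt, hc⟩
  · rw [norm_iteratedFDeriv_eq_norm_iteratedDeriv, Real.norm_eq_abs]
    interval_cases n
    · simpa using hC p
    · simpa [d1] using hC' p
    · simpa [iteratedDeriv_succ, d1, d2] using hC'' p

theorem add (hf : BddC2 f) (hg : BddC2 g) : BddC2 fun p => f p + g p := by
  obtain ⟨hf, A, hA⟩ := hf
  obtain ⟨hg, B, hB⟩ := hg
  refine ⟨hf.add hg, A + B, fun n hn p => ?_⟩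
  have hn' : (n : WithTop ℕ∞) ≤ 2 := by exact_mod_cast hn
  rw [fun_iteratedFDeriv_add_apply (hf.of_le hn').contDiffAt (hg.of_le hn').contDiffAt]
  exact (norm_add_le _ _).trans (add_le_add (hA n hn p) (hB n hn p))

theorem mul (hf : BddC2 f) (hg : BddC2 g) : BddC2 fun p => f p * g p := by
  obtain ⟨hf, A, hA⟩ := hf
  obtain ⟨hg, B, hB⟩ := hg
  have hA0 : 0 ≤ A := (norm_nonneg _).trans (hA 0 (by norm_num) 0)
  refine ⟨hf.mul hg, ∑ i ∈ Finset.range 3, 2 * A * B, fun n hn p => ?_⟩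
  have hn' : (n : WithTop ℕ∞) ≤ 2 := by exact_mod_cast hn
  have hB0 : 0 ≤ B := (norm_nonneg _).trans (hB 0 (by norm_num) 0)
  refine (norm_iteratedFDeriv_mul_le hf hg p hn').trans ?_
  refine (Finset.sum_le_sum (g := fun _ => 2 * A * B) fun i hi => ?_).trans
    (Finset.sum_le_sum_of_subset_of_nonneg (Finset.range_mono (by omega))
      fun _ _ _ => by positivity)
  have hi' : i ≤ n := Nat.lt_succ_iff.1 (Finset.mem_range.1 hi)
  have hch : (n.choose i : ℝ) ≤ 2 := by
    have : n.choose i ≤ 2 := by interval_cases n <;> interval_cases i <;> decide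
    exact_mod_cast this
  gcongr
  · exact hA i (by omega) p
  · exact hB (n - i) (by omega) p

theorem comp_clm (hf : BddC2 f) (L : F →L[ℝ] E) : BddC2 fun p => f (L p) := by
  obtain ⟨hf, A, hA⟩ := hf
  have hA0 : 0 ≤ A := (norm_nonneg _).trans (hA 0 (by norm_num) 0)
  refine ⟨hf.comp L.contDiff, A * (1 + ‖L‖) ^ 2, fun n hn p => ?_⟩
  have hn' : (n : WithTop ℕ∞) ≤ 2 := by exact_mod_cast hn
  change ‖iteratedFDeriv ℝ n (f ∘ L) p‖ ≤ _
  rw [L.iteratedFDeriv_comp_right hf p hn']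
  refine (ContinuousMultilinearMap.norm_compContinuousLinearMap_le _ _).trans ?_
  rw [Finset.prod_const, Finset.card_univ, Fintype.card_fin]
  gcongr
  · exact hA n hn _
  · calc ‖L‖ ^ n ≤ (1 + ‖L‖) ^ n := by gcongr; linarith
      _ ≤ (1 + ‖L‖) ^ 2 := pow_le_pow_right₀ (by linarith [norm_nonneg L]) hn

end BddC2

/-- The operator `∂²_s + 2⟨e, D_y ∂_s⟩ + Δ_y`. -/
def ellOp {d : ℕ} (e : Euc d) (P : ℝ × Euc d → ℝ) (s : ℝ) (y : Euc d) : ℝ :=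
  dSS P s y + 2 * mixedDeriv e P s y + lapY P s y

theorem hasFDerivAt_fderiv_apply {E : Type*} [NormedAddCommGroup E] [NormedSpace ℝ E]
    {f : E → ℝ} (hf : ContDiff ℝ 2 f) (v p : E) :
    HasFDerivAt (fun p => fderiv ℝ f p v) ((fderiv ℝ (fderiv ℝ f) p).flip v) p := by
  have h1 : ContDiff ℝ 1 (fderiv ℝ f) := hf.fderiv_right (by norm_num)
  exact ((h1.differentiable (by norm_num) p).hasFDerivAt.clm_apply
    (hasFDerivAt_const v p)).congr_fderiv (by simp)

theorem ellOp_eq {d : ℕ} (e : Euc d) {P : ℝ × Euc d → ℝ} (hP : ContDiff ℝ 2 P) (s : ℝ)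
    (y : Euc d) :
    ellOp e P s y = fderiv ℝ (fderiv ℝ P) (s, y) (1, 0) (1, 0) +
      2 * fderiv ℝ (fderiv ℝ P) (s, y) (0, e) (1, 0) +
      ∑ i, fderiv ℝ (fderiv ℝ P) (s, y) (0, EuclideanSpace.basisFun (Fin d) ℝ i)
        (0, EuclideanSpace.basisFun (Fin d) ℝ i) := by
  have hPd : ∀ p, HasFDerivAt P (fderiv ℝ P p) p := fun p =>
    (hP.differentiable (by norm_num) p).hasFDerivAt
  have hs : ∀ s y, HasDerivAt (fun s : ℝ => (s, y)) ((1 : ℝ), (0 : Euc d)) s := fun s y =>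
    (hasDerivAt_id s).prodMk (hasDerivAt_const s y)
  have hy : ∀ s y, HasFDerivAt (fun y : Euc d => (s, y)) (ContinuousLinearMap.inr ℝ ℝ (Euc d)) y :=
    fun s y => hasFDerivAt_prodMk_right s y
  have h1 : ∀ s y, deriv (fun s' => P (s', y)) s = fderiv ℝ P (s, y) (1, 0) := fun s y =>
    ((hPd (s, y)).comp_hasDerivAt s (hs s y)).deriv
  have hdSS : dSS P s y = fderiv ℝ (fderiv ℝ P) (s, y) (1, 0) (1, 0) := by
    simp only [dSS, h1]
    exact ((hasFDerivAt_fderiv_apply hP (1, 0) (s, y)).comp_hasDerivAt s (hs s y)).deriv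
  have hmixed : mixedDeriv e P s y = fderiv ℝ (fderiv ℝ P) (s, y) (0, e) (1, 0) := by
    simp only [mixedDeriv, h1]
    have h4 := ((hasFDerivAt_fderiv_apply hP (1, 0) (s, y)).comp y (hy s y)).fderiv
    simp only [Function.comp_def] at h4
    rw [real_inner_comm, inner_gradient_left, h4]
    simp
  have hlap : lapY P s y = ∑ i, fderiv ℝ (fderiv ℝ P) (s, y)
      (0, EuclideanSpace.basisFun (Fin d) ℝ i) (0, EuclideanSpace.basisFun (Fin d) ℝ i) := by
    have hg : ContDiff ℝ 2 fun z => P (s, z) := hP.comp (contDiff_prodMk_right s)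
    have hgrad : Differentiable ℝ fun y' => gradient (fun z => P (s, z)) y' :=
      (InnerProductSpace.toDual ℝ (Euc d)).symm.toContinuousLinearEquiv.differentiable.comp
        ((hg.fderiv_right (m := 1) (by norm_num)).differentiable (by norm_num))
    rw [lapY, clTrace, LinearMap.trace_eq_sum_inner _ (EuclideanSpace.basisFun (Fin d) ℝ)]
    refine Finset.sum_congr rfl fun i _ => ?_
    set E := EuclideanSpace.basisFun (Fin d) ℝ i
    have h2 := ((innerSL ℝ E).hasFDerivAt.comp y (hgrad y).hasFDerivAt).fderiv
    have h3 : (⇑(innerSL ℝ E) ∘ fun y' => gradient (fun z => P (s, z)) y')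
        = fun y' => fderiv ℝ P (s, y') (0, E) := by
      funext y'
      simp only [Function.comp_apply, innerSL_apply_apply]
      rw [real_inner_comm, inner_gradient_left]
      have := ((hPd (s, y')).comp y' (hy s y')).fderiv
      simp only [Function.comp_def] at this
      rw [this]
      simp
    rw [h3] at h2
    have h4 := ((hasFDerivAt_fderiv_apply hP (0, E) (s, y)).comp y (hy s y)).fderiv
    simp only [Function.comp_def] at h4
    rw [h4] at h2
    have h5 := congrArg (fun L => L E) h2
    simpa using h5.symm
  rw [ellOp, hdSS, hmixed, hlap]

theorem ellOp_add {d : ℕ} (e : Euc d) {P Q : ℝ × Euc d → ℝ} (hP : ContDiff ℝ 2 P)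
    (hQ : ContDiff ℝ 2 Q) (s : ℝ) (y : Euc d) :
    ellOp e (fun p => P p + Q p) s y = ellOp e P s y + ellOp e Q s y := by
  have h1 : fderiv ℝ (fun p => P p + Q p) = fun p => fderiv ℝ P p + fderiv ℝ Q p := by
    funext p
    exact fderiv_fun_add (hP.differentiable (by norm_num) p) (hQ.differentiable (by norm_num) p)
  have h2 : fderiv ℝ (fderiv ℝ fun p => P p + Q p) (s, y)
      = fderiv ℝ (fderiv ℝ P) (s, y) + fderiv ℝ (fderiv ℝ Q) (s, y) := by
    rw [h1]
    exact fderiv_fun_add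
      ((hP.fderiv_right (m := 1) (by norm_num)).differentiable (by norm_num) (s, y))
      ((hQ.fderiv_right (m := 1) (by norm_num)).differentiable (by norm_num) (s, y))
  rw [ellOp_eq e (hP.add hQ), ellOp_eq e hP, ellOp_eq e hQ, h2]
  simp only [add_apply, Finset.sum_add_distrib]
  ring

/-- The linear functional `(s, y) ↦ ⟨K, y - s e⟩`. -/
def phase {d : ℕ} (e K : Euc d) : ℝ × Euc d →L[ℝ] ℝ :=
  (innerSL ℝ K).comp
    (ContinuousLinearMap.snd ℝ ℝ (Euc d) - (ContinuousLinearMap.fst ℝ ℝ (Euc d)).smulRight e)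

theorem phase_apply {d : ℕ} (e K : Euc d) (s : ℝ) (y : Euc d) :
    phase e K (s, y) = ⟪K, y⟫ - s * ⟪K, e⟫ := by
  simp [phase]

theorem ellOp_mul_comp_phase {d : ℕ} (e K : Euc d) {R R' R'' ψ ψ' : ℝ → ℝ}
    (hR : BddC2 R) (hψ : BddC2 ψ)
    (h : ∀ s, HasDerivAt R (R' s) s) (h' : ∀ s, HasDerivAt R' (R'' s) s)
    (hp : ∀ s, HasDerivAt ψ (ψ' s) s) (hp' : ∀ s, HasDerivAt ψ' (-ψ s) s) (s : ℝ) (y : Euc d) :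
    ellOp e (fun p => R p.1 * ψ (phase e K p)) s y =
      (R'' s - (‖K‖ ^ 2 - ⟪K, e⟫ ^ 2) * R s) * ψ (phase e K (s, y)) := by
  set ℓ := phase e K with hℓ
  have hfst : ∀ p : ℝ × Euc d, HasFDerivAt (fun p : ℝ × Euc d => p.1)
    (ContinuousLinearMap.fst ℝ ℝ (Euc d)) p := fun p => hasFDerivAt_fst
  have hprod : ∀ {a a' b b' : ℝ → ℝ}, (∀ s, HasDerivAt a (a' s) s) → (∀ s, HasDerivAt b (b' s) s) →
      ∀ p, HasFDerivAt (fun p : ℝ × Euc d => a p.1 * b (ℓ p))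
        ((a p.1 * b' (ℓ p)) • ℓ + (a' p.1 * b (ℓ p)) • ContinuousLinearMap.fst ℝ ℝ (Euc d)) p := by
    intro a a' b b' ha hb p
    refine (((ha p.1).comp_hasFDerivAt p (hfst p)).mul
      ((hb (ℓ p)).comp_hasFDerivAt p ℓ.hasFDerivAt)).congr_fderiv ?_
    ext <;> simp <;> ring
  have hC : ContDiff ℝ 2 fun p : ℝ × Euc d => R p.1 * ψ (ℓ p) :=
    ((hR.comp_clm (ContinuousLinearMap.fst ℝ ℝ (Euc d))).mul (hψ.comp_clm ℓ)).1
  have h1 : fderiv ℝ (fun p : ℝ × Euc d => R p.1 * ψ (ℓ p)) = fun p =>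
      (R p.1 * ψ' (ℓ p)) • ℓ + (R' p.1 * ψ (ℓ p)) • ContinuousLinearMap.fst ℝ ℝ (Euc d) :=
    funext fun p => (hprod h hp p).fderiv
  rw [ellOp_eq e hC, h1, (((hprod h hp' (s, y)).smul_const ℓ).fun_add
    ((hprod h' hp (s, y)).smul_const (ContinuousLinearMap.fst ℝ ℝ (Euc d)))).fderiv]
  have hK : ∑ i, ⟪K, EuclideanSpace.basisFun (Fin d) ℝ i⟫ * ⟪K, EuclideanSpace.basisFun (Fin d) ℝ i⟫
      = ‖K‖ ^ 2 := by
    have := (EuclideanSpace.basisFun (Fin d) ℝ).sum_inner_mul_inner K K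
    rw [← real_inner_self_eq_norm_sq, ← this]
    refine Finset.sum_congr rfl fun i _ => ?_
    rw [real_inner_comm K]
  simp only [hℓ, add_apply, ContinuousLinearMap.smulRight_apply,
    smul_apply, smul_eq_mul, phase_apply, ContinuousLinearMap.coe_fst']
  simp only [inner_zero_right, zero_mul, mul_zero, add_zero, sub_zero, one_mul, mul_one]
  have hsum : ∀ c : ℝ, ∑ i, c * ⟪K, EuclideanSpace.basisFun (Fin d) ℝ i⟫ *
      ⟪K, EuclideanSpace.basisFun (Fin d) ℝ i⟫ = c * ‖K‖ ^ 2 := fun c => by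
    simp_rw [mul_assoc]
    rw [← Finset.mul_sum, hK]
  rw [hsum]
  ring

theorem bddC2_cos : BddC2 Real.cos :=
  BddC2.of_hasDerivAt (C := 1) Real.hasDerivAt_cos (fun s => (Real.hasDerivAt_sin s).neg)
    Real.continuous_cos.neg Real.abs_cos_le_one (fun s => by simpa using Real.abs_sin_le_one s)
    (fun s => by simpa using Real.abs_cos_le_one s)

theorem bddC2_sin : BddC2 Real.sin :=
  BddC2.of_hasDerivAt (C := 1) Real.hasDerivAt_sin Real.hasDerivAt_cos
    Real.continuous_sin.neg Real.abs_sin_le_one Real.abs_cos_le_one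
    (fun s => by simpa using Real.abs_sin_le_one s)

/-- `G` is such that `ellOp e P - V P = φ G` has a bounded periodic solution. -/
def Solvable {d : ℕ} (e : Euc d) (φ V : ℝ → ℝ) (G : ℝ → Euc d → ℝ) : Prop :=
  ∃ P : ℝ × Euc d → ℝ, (∀ (s : ℝ) (y z : Euc d), IsIntVec z → P (s, y + z) = P (s, y)) ∧
    BddC2 P ∧ ∀ s y, ellOp e P s y - V s * P (s, y) = φ s * G s y

namespace Solvable

variable {d : ℕ} {e : Euc d} {φ V : ℝ → ℝ}

theorem add {G H : ℝ → Euc d → ℝ} (hG : Solvable e φ V G) (hH : Solvable e φ V H) :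
    Solvable e φ V fun s y => G s y + H s y := by
  obtain ⟨P, hP, hP2, hPe⟩ := hG
  obtain ⟨Q, hQ, hQ2, hQe⟩ := hH
  refine ⟨fun p => P p + Q p, fun s y z hz => by simp only [hP s y z hz, hQ s y z hz], hP2.add hQ2,
    fun s y => ?_⟩
  rw [ellOp_add e hP2.1 hQ2.1]
  linear_combination hPe s y + hQe s y

/-- A source `γ(s) ψ(⟨K, y - s e⟩)` with `ψ'' = -ψ` is solvable once the profile equation is. -/
theorem of_profile {K : Euc d} {R R' ψ ψ' : ℝ → ℝ} {γ : ℝ →ᵇ ℝ} {B C : ℝ}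
    (hφ : Continuous φ) (hV : Continuous V) (hφB : ∀ s, |φ s| ≤ B) (hVB : ∀ s, |V s| ≤ B)
    (hK : ∀ z : Euc d, IsIntVec z → ∀ t, ψ (t + ⟪K, z⟫) = ψ t) (hψ : BddC2 ψ)
    (hp : ∀ s, HasDerivAt ψ (ψ' s) s) (hp' : ∀ s, HasDerivAt ψ' (-ψ s) s)
    (h : ∀ s, HasDerivAt R (R' s) s)
    (h' : ∀ s, HasDerivAt R' ((V s + (‖K‖ ^ 2 - ⟪K, e⟫ ^ 2)) * R s + φ s * γ s) s)
    (hC : ∀ s, |R s| ≤ C) (hC' : ∀ s, |R' s| ≤ C) :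
    Solvable e φ V fun s y => γ s * ψ (⟪K, y⟫ - s * ⟪K, e⟫) := by
  set l := ‖K‖ ^ 2 - ⟪K, e⟫ ^ 2 with hl
  have hC0 : 0 ≤ C := (abs_nonneg _).trans (hC 0)
  have hB0 : 0 ≤ B := (abs_nonneg _).trans (hVB 0)
  have hR : BddC2 R := by
    refine BddC2.of_hasDerivAt (C := C + ((B + |l|) * C + B * ‖γ‖)) h h' ?_
      (fun s => (hC s).trans ?_) (fun s => (hC' s).trans ?_) (fun s => ?_)
    · have : Continuous R := continuous_iff_continuousAt.2 fun s => (h s).continuousAt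
      have := γ.continuous
      fun_prop
    · have : 0 ≤ (B + |l|) * C + B * ‖γ‖ := by positivity
      linarith
    · have : 0 ≤ (B + |l|) * C + B * ‖γ‖ := by positivity
      linarith
    · have h1 : |(V s + l) * R s| ≤ (B + |l|) * C := by
        rw [abs_mul]
        gcongr
        · exact (abs_add_le _ _).trans (by gcongr; exact hVB s)
        · exact hC s
      have h2 : |φ s * γ s| ≤ B * ‖γ‖ := by
        rw [abs_mul]
        gcongr
        · exact hφB s
        · exact γ.norm_coe_le_norm s
      linarith [abs_add_le ((V s + l) * R s) (φ s * γ s)]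
  refine ⟨fun p => R p.1 * ψ (phase e K p), fun s y z hz => ?_,
    (hR.comp_clm (ContinuousLinearMap.fst ℝ ℝ (Euc d))).mul (hψ.comp_clm (phase e K)),
    fun s y => ?_⟩
  · simp only [phase_apply, inner_add_right]
    rw [add_sub_right_comm, hK z hz]
  · rw [ellOp_mul_comp_phase e K hR hψ h h' hp hp', ← hl]
    simp only [← phase_apply]
    ring

theorem cos_add_sin {K : Euc d} {φ' : ℝ → ℝ} {B : ℝ} (hφ : ∀ s, HasDerivAt φ (φ' s) s)
    (hφ' : ∀ s, HasDerivAt φ' (V s * φ s) s) (hpos : ∀ s, 0 < φ s) (hB : ∀ s, φ s ≤ B)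
    (hB' : ∀ s, |φ' s| ≤ B) (hV : Continuous V) (hVB : ∀ s, |V s| ≤ B)
    (hK : ∀ z : Euc d, IsIntVec z → ∃ n : ℤ, ⟪K, z⟫ = n * (2 * Real.pi))
    (hl : 0 < ‖K‖ ^ 2 - ⟪K, e⟫ ^ 2) (α β : ℝ →ᵇ ℝ) :
    Solvable e φ V fun s y => α s * Real.cos ⟪K, y⟫ + β s * Real.sin ⟪K, y⟫ := by
  have hφc : Continuous φ := continuous_iff_continuousAt.2 fun s => (hφ s).continuousAt
  have hφB : ∀ s, |φ s| ≤ B := fun s => by rw [abs_of_pos (hpos s)]; exact hB s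
  let ω := ⟪K, e⟫
  let c : ℝ →ᵇ ℝ := BoundedContinuousFunction.ofNormedAddCommGroup (fun s => Real.cos (s * ω))
    (by fun_prop) 1 fun s => Real.abs_cos_le_one _
  let t : ℝ →ᵇ ℝ := BoundedContinuousFunction.ofNormedAddCommGroup (fun s => Real.sin (s * ω))
    (by fun_prop) 1 fun s => Real.abs_sin_le_one _
  obtain ⟨R, R', C, h, h', hC, hC'⟩ := exists_bounded_solution_of_pos hφ hφ' hpos hB hB' hV hVB hl
    (α * c + β * t)
  obtain ⟨Q, Q', D, g, g', hD, hD'⟩ := exists_bounded_solution_of_pos hφ hφ' hpos hB hB' hV hVB hl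
    (β * c - α * t)
  have s1 := of_profile hφc hV hφB hVB (fun z hz t => by
    obtain ⟨n, hn⟩ := hK z hz
    rw [hn, Real.cos_add_int_mul_two_pi]) bddC2_cos Real.hasDerivAt_cos
    (fun s => (Real.hasDerivAt_sin s).neg) h h' hC hC'
  have s2 := of_profile hφc hV hφB hVB (fun z hz t => by
    obtain ⟨n, hn⟩ := hK z hz
    rw [hn, Real.sin_add_int_mul_two_pi]) bddC2_sin Real.hasDerivAt_sin
    Real.hasDerivAt_cos g g' hD hD'
  convert s1.add s2 using 3 with s y
  change _ = (α s * Real.cos (s * ω) + β s * Real.sin (s * ω)) * Real.cos (⟪K, y⟫ - s * ω) +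
    (β s * Real.cos (s * ω) - α s * Real.sin (s * ω)) * Real.sin (⟪K, y⟫ - s * ω)
  have e1 : ⟪K, y⟫ = (⟪K, y⟫ - s * ω) + s * ω := by ring
  conv_lhs => rw [e1, Real.cos_add, Real.sin_add]
  ring

end Solvable

theorem sq_norm_sub_sq_inner_pos {d : ℕ} {e : Euc d} (he : ‖e‖ = 1) (hirr : ¬ RatDir e)
    {k : Fin d → ℤ} (hk : k ≠ 0) {K : Euc d} (hK : ∀ i, K i = 2 * Real.pi * k i) :
    0 < ‖K‖ ^ 2 - ⟪K, e⟫ ^ 2 := by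
  have h1 : ‖K - ⟪K, e⟫ • e‖ ^ 2 = ‖K‖ ^ 2 - ⟪K, e⟫ ^ 2 := by
    rw [norm_sub_sq_real, inner_smul_right, norm_smul, he, Real.norm_eq_abs, mul_one, sq_abs]
    ring
  rw [← h1]
  refine pow_pos (norm_pos_iff.2 fun h0 => ?_) 2
  have h2 : ∀ i, K i = ⟪K, e⟫ * e i := fun i => by
    have := congrArg (fun v : Euc d => v i) (sub_eq_zero.1 h0)
    simpa using this
  have hω : ⟪K, e⟫ ≠ 0 := fun hω => hk <| funext fun i => by
    have := h2 i
    rw [hK, hω, zero_mul] at this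
    simpa [Real.pi_ne_zero] using this
  refine hirr ⟨⟪K, e⟫⁻¹ * (2 * Real.pi), k, fun i => ?_⟩
  have := h2 i
  rw [hK] at this
  field_simp
  linarith

theorem StandingWave.solvable_mode {d : ℕ} {e : Euc d} {W q : ℝ → ℝ} (hq : StandingWave W q)
    (hW : DoubleWell W) (he : ‖e‖ = 1) (hirr : ¬ RatDir e) {k : Fin d → ℤ} (hk : k ≠ 0)
    {K : Euc d} (hK : ∀ i, K i = 2 * Real.pi * k i) (α β : ℝ →ᵇ ℝ) :
    Solvable e (deriv q) (fun s => deriv (deriv W) (q s))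
      fun s y => α s * Real.cos ⟪K, y⟫ + β s * Real.sin ⟪K, y⟫ := by
  obtain ⟨B, hB, hB', hVB⟩ := hq.exists_bound hW
  refine Solvable.cos_add_sin hq.hasDerivAt_deriv (hq.hasDerivAt_deriv2 hW)
    (hq.deriv_pos hW) hB hB' (hW.continuous_deriv2.comp hq.1.continuous) hVB (fun z hz => ?_)
    (sq_norm_sub_sq_inner_pos he hirr hk hK) α β
  choose n hn using hz
  refine ⟨∑ i, k i * n i, ?_⟩
  rw [PiLp.inner_apply]
  push_cast
  rw [Finset.sum_mul]
  refine Finset.sum_congr rfl fun i _ => ?_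
  simp only [hK, hn, RCLike.inner_apply, conj_trivial]
  ring

theorem StandingWave.solvable_of_integral_eq_zero {d : ℕ} (e : Euc d) {W q : ℝ → ℝ}
    (hq : StandingWave W q) (hW : DoubleWell W) (a : ℝ →ᵇ ℝ) (ha : ∫ s, a s * deriv q s ^ 2 = 0) :
    Solvable e (deriv q) (fun s => deriv (deriv W) (q s)) fun s _ => a s := by
  obtain ⟨B, hB, hB', hVB⟩ := hq.exists_bound hW
  obtain ⟨μ, S, hμ, hS, hbot, htop⟩ := hq.exists_decay hW
  obtain ⟨R, R', C, h, h', hC, hC'⟩ := exists_bounded_solution_of_integral_eq_zero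
    hq.hasDerivAt_deriv (hq.hasDerivAt_deriv2 hW) (hq.deriv_pos hW) hB hVB hS hμ hbot
    (hq.tendsto_deriv_atBot hW) htop (hq.tendsto_deriv_atTop hW) (hq.integrable_deriv_sq hW) a ha
  have := Solvable.of_profile (e := e) (K := 0) (γ := a) hq.continuous_deriv
    (hW.continuous_deriv2.comp hq.1.continuous)
    (fun s => by rw [abs_of_pos (hq.deriv_pos hW s)]; exact hB s) hVB
    (by simp) bddC2_cos Real.hasDerivAt_cos (fun s => (Real.hasDerivAt_sin s).neg) h
    (fun s => (h' s).congr_deriv (by simp)) hC hC'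
  simpa [Function.comp_def] using this

theorem exists_span_mFourier_approx {ι : Type*} [Fintype ι] {g : (ι → ℝ) → ℂ} (hg : Continuous g)
    (hper : ∀ (x : ι → ℝ) (n : ι → ℤ), g (x + fun i => (n i : ℝ)) = g x) {ε : ℝ} (hε : 0 < ε) :
    ∃ f ∈ Submodule.span ℂ (range (UnitAddTorus.mFourier (d := ι))),
      ∀ x : ι → ℝ, ‖g x - f fun i => (x i : UnitAddCircle)‖ < ε := by
  let π : C(ι → ℝ, UnitAddTorus ι) := ⟨Pi.map fun _ x => (x : UnitAddCircle), by
    exact (IsOpenQuotientMap.piMap fun _ => QuotientAddGroup.isOpenQuotientMap_mk).continuous⟩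
  have hπ : IsQuotientMap π :=
    (IsOpenQuotientMap.piMap fun _ => QuotientAddGroup.isOpenQuotientMap_mk).isQuotientMap
  have hfac : Function.FactorsThrough (⟨g, hg⟩ : C(ι → ℝ, ℂ)) π := fun x y hxy => by
    have : ∀ i, ∃ n : ℤ, (n : ℝ) = x i - y i := fun i => by
      have h1 : (x i : UnitAddCircle) = y i := congrFun hxy i
      obtain ⟨n, hn⟩ := AddSubgroup.mem_zmultiples_iff.1 (QuotientAddGroup.eq_iff_sub_mem.1 h1)
      exact ⟨n, by simpa using hn⟩
    choose n hn using this
    have h2 : x = y + fun i => (n i : ℝ) := funext fun i => by simp [hn]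
    change g x = g y
    rw [h2, hper]
  have hF : hπ.lift ⟨g, hg⟩ hfac ∈ closure
      (Submodule.span ℂ (range (UnitAddTorus.mFourier (d := ι))) : Set C(UnitAddTorus ι, ℂ)) := by
    rw [← Submodule.topologicalClosure_coe, UnitAddTorus.span_mFourier_closure_eq_top]
    trivial
  obtain ⟨f, hf, hfF⟩ := Metric.mem_closure_iff.1 hF ε hε
  refine ⟨f, hf, fun x => ?_⟩
  have h3 : g x = hπ.lift ⟨g, hg⟩ hfac (π x) :=
    (DFunLike.congr_fun (hπ.lift_comp ⟨g, hg⟩ hfac) x).symm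
  rw [h3, ← dist_eq_norm]
  exact (ContinuousMap.dist_apply_le_dist _).trans_lt hfF

theorem unitCube_eq_preimage (d : ℕ) :
    unitCube d = WithLp.ofLp ⁻¹' (univ.pi fun _ : Fin d => Icc (0 : ℝ) 1) := by
  ext y
  simp only [unitCube, mem_ofPred_eq, mem_preimage, mem_univ_pi]

theorem isCompact_unitCube (d : ℕ) : IsCompact (unitCube d) := by
  rw [unitCube_eq_preimage]
  exact (PiLp.homeomorph 2 fun _ : Fin d => ℝ).isCompact_preimage.2
    (isCompact_univ_pi fun _ => isCompact_Icc)

theorem setIntegral_unitCube_prod {d : ℕ} (g : Fin d → ℝ → ℂ) :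
    ∫ y in unitCube d, ∏ i, g i (y i) = ∏ i, ∫ t in (0 : ℝ)..1, g i t := by
  rw [unitCube_eq_preimage, (PiLp.volume_preserving_ofLp (Fin d)).setIntegral_preimage_emb
    (MeasurableEquiv.toLp 2 (Fin d → ℝ)).symm.measurableEmbedding fun x => ∏ i, g i (x i),
    volume_pi, Measure.restrict_pi_pi, integral_fintype_prod_eq_prod]
  refine Finset.prod_congr rfl fun i _ => ?_
  rw [intervalIntegral.integral_of_le zero_le_one, integral_Icc_eq_integral_Ioc]

theorem volume_real_unitCube (d : ℕ) : volume.real (unitCube d) = 1 := by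
  have := setIntegral_unitCube_prod fun (_ : Fin d) (_ : ℝ) => (1 : ℂ)
  simp only [Finset.prod_const_one, setIntegral_const, intervalIntegral.integral_const] at this
  simpa using this

theorem intervalIntegral_exp_two_pi_int {k : ℤ} (hk : k ≠ 0) :
    ∫ t in (0 : ℝ)..1, Complex.exp (2 * Real.pi * Complex.I * k * t) = 0 := by
  rw [integral_exp_mul_complex
    (mul_ne_zero Complex.two_pi_I_ne_zero (Int.cast_ne_zero.2 hk))]
  have : Complex.exp (2 * Real.pi * Complex.I * k) = 1 := by
    rw [mul_comm]
    exact Complex.exp_int_mul_two_pi_mul_I k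
  simp [this]

theorem setIntegral_unitCube_exp {d : ℕ} {k : Fin d → ℤ} (hk : k ≠ 0) :
    ∫ y in unitCube d, ∏ i, Complex.exp (2 * Real.pi * Complex.I * k i * y i) = 0 := by
  obtain ⟨i, hi⟩ := Function.ne_iff.1 hk
  rw [setIntegral_unitCube_prod fun i t => Complex.exp (2 * Real.pi * Complex.I * k i * t)]
  exact Finset.prod_eq_zero (Finset.mem_univ i) (intervalIntegral_exp_two_pi_int hi)

/-- The point of the torus represented by `r` (in the extra coordinate) and `y`. -/
def torusPt {d : ℕ} (r : ℝ) (y : Euc d) : UnitAddTorus (Option (Fin d)) :=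
  fun o => ((o.elim r fun i => y i : ℝ) : UnitAddCircle)

theorem continuous_torusPt {d : ℕ} {τ : ℝ → ℝ} (hτ : Continuous τ) :
    Continuous fun p : ℝ × Euc d => torusPt (τ p.1) p.2 := by
  refine continuous_pi fun o => (AddCircle.continuous_mk' (1 : ℝ)).comp ?_
  cases o <;> simp only [Option.elim] <;> fun_prop

theorem mFourier_torusPt {d : ℕ} (n : Option (Fin d) → ℤ) (r : ℝ) (y : Euc d) :
    UnitAddTorus.mFourier n (torusPt r y) = fourier (n none) (r : UnitAddCircle) *
      ∏ i, Complex.exp (2 * Real.pi * Complex.I * n (some i) * y i) := by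
  change ∏ o, fourier (n o) (torusPt r y o) = _
  rw [Fintype.prod_option]
  congr 1
  refine Finset.prod_congr rfl fun i _ => ?_
  simp [torusPt]

theorem continuous_apply_torusPt {d : ℕ} (f : C(UnitAddTorus (Option (Fin d)), ℂ)) (c : ℂ) (r : ℝ) :
    Continuous fun y : Euc d => c * f (torusPt r y) := by
  have h := (continuous_torusPt (d := d) (continuous_const (y := r))).comp
    (Continuous.prodMk_right (0 : ℝ))
  exact continuous_const.mul (f.continuous.comp h)

theorem StandingWave.solvable_span {d : ℕ} {e : Euc d} {W q τ : ℝ → ℝ} (hq : StandingWave W q)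
    (hW : DoubleWell W) (he : ‖e‖ = 1) (hirr : ¬ RatDir e) (hτ : Continuous τ)
    {f : C(UnitAddTorus (Option (Fin d)), ℂ)}
    (hf : f ∈ Submodule.span ℂ (range UnitAddTorus.mFourier)) (c : ℂ) :
    Solvable e (deriv q) (fun s => deriv (deriv W) (q s)) fun s y =>
      (c * f (torusPt (τ s) y)).re - ∫ y' in unitCube d, (c * f (torusPt (τ s) y')).re := by
  have hz : Solvable e (deriv q) (fun s => deriv (deriv W) (q s)) fun _ _ => 0 :=
    hq.solvable_of_integral_eq_zero e hW 0 (by simp)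
  have hint : ∀ (f : C(UnitAddTorus (Option (Fin d)), ℂ)) (c : ℂ) r,
      IntegrableOn (fun y : Euc d => c * f (torusPt r y)) (unitCube d) := fun f c r =>
    (continuous_apply_torusPt f c r).continuousOn.integrableOn_compact (isCompact_unitCube d)
  induction hf using Submodule.span_induction generalizing c with
  | mem f hf =>
    obtain ⟨n, rfl⟩ := hf
    by_cases hk : (fun i => n (some i)) = 0
    · convert hz using 3 with s y
      have : ∀ y : Euc d, UnitAddTorus.mFourier n (torusPt (τ s) y) =
          fourier (n none) (τ s : UnitAddCircle) :=
        fun y => by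
          rw [mFourier_torusPt]
          have h0 : ∀ i, n (some i) = 0 := fun i => congrFun hk i
          rw [Finset.prod_eq_one fun i _ => by simp [h0 i], mul_one]
      simp only [this, setIntegral_const, volume_real_unitCube, one_smul, sub_self]
    · let a : ℝ → ℂ := fun s => c * fourier (n none) (τ s : UnitAddCircle)
      have ha : Continuous a := continuous_const.mul
        ((fourier (n none)).continuous.comp ((AddCircle.continuous_mk' (1 : ℝ)).comp hτ))
      have hab : ∀ s, ‖a s‖ ≤ ‖c‖ := fun s => by
        simp only [a, norm_mul, fourier_apply, Circle.norm_coe, mul_one, le_refl]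
      let K : Euc d := WithLp.toLp 2 fun i => 2 * Real.pi * n (some i)
      let α : ℝ →ᵇ ℝ := BoundedContinuousFunction.ofNormedAddCommGroup (fun s => (a s).re)
        (Complex.continuous_re.comp ha) ‖c‖ fun s => (Complex.abs_re_le_norm _).trans (hab s)
      let β : ℝ →ᵇ ℝ := BoundedContinuousFunction.ofNormedAddCommGroup (fun s => -(a s).im)
        (Complex.continuous_im.comp ha).neg ‖c‖ fun s => by
          rw [norm_neg]
          exact (Complex.abs_im_le_norm _).trans (hab s)
      convert hq.solvable_mode hW he hirr hk (K := K) (fun i => rfl) α β using 3 with s y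
      have h1 : ∀ y : Euc d, c * UnitAddTorus.mFourier n (torusPt (τ s) y) =
          a s * ∏ i, Complex.exp (2 * Real.pi * Complex.I * n (some i) * y i) := fun y => by
        rw [mFourier_torusPt]
        exact (mul_assoc _ _ _).symm
      have h2 : ∫ y' in unitCube d, (c * UnitAddTorus.mFourier n (torusPt (τ s) y')).re = 0 := by
        have := integral_re (hint (UnitAddTorus.mFourier n) c (τ s))
        simp only [RCLike.re_to_complex] at this
        rw [this]
        simp_rw [h1]
        rw [integral_const_mul, setIntegral_unitCube_exp hk]
        simp
      have h3 : ∏ i, Complex.exp (2 * Real.pi * Complex.I * n (some i) * y i) =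
          Complex.exp ((⟪K, y⟫ : ℝ) * Complex.I) := by
        rw [← Complex.exp_sum]
        congr 1
        rw [PiLp.inner_apply]
        push_cast
        rw [Finset.sum_mul]
        refine Finset.sum_congr rfl fun i _ => ?_
        simp [K]
        ring
      rw [h2, h1, h3, sub_zero, Complex.mul_re, Complex.exp_ofReal_mul_I_re,
        Complex.exp_ofReal_mul_I_im]
      change _ = (a s).re * _ + -(a s).im * _
      ring
  | zero => simpa using hz
  | add f g _ _ hf hg =>
    convert (hf c).add (hg c) using 3 with s y
    have h1 : ∀ y : Euc d, (c * (f + g) (torusPt (τ s) y)).re =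
        (c * f (torusPt (τ s) y)).re + (c * g (torusPt (τ s) y)).re := fun y => by
      simp [mul_add]
    simp_rw [h1]
    have h2 := integral_add (hint f c (τ s)).re (hint g c (τ s)).re
    simp only [RCLike.re_to_complex] at h2
    rw [h2]
    ring
  | smul a f _ hf =>
    convert hf (c * a) using 5 with s y
    · simp [mul_assoc]
    · simp [mul_assoc]

theorem StandingWave.integral_deriv_sq_pos {W q : ℝ → ℝ} (hq : StandingWave W q)
    (hW : DoubleWell W) : 0 < ∫ s, deriv q s ^ 2 :=
  integral_pos_of_integrable_nonneg_nonzero (x := 0) (hq.continuous_deriv.pow 2)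
    (hq.integrable_deriv_sq hW) (fun _ => sq_nonneg _) (pow_pos (hq.deriv_pos hW 0) 2).ne'

theorem Mobility.abs_le {d : ℕ} {m : Euc d → Euc d → ℝ} {θ Θ : ℝ} (hm : Mobility d m θ Θ)
    (y v : Euc d) : |m y v| ≤ Θ := by
  obtain ⟨-, -, hθ, hb, -⟩ := hm
  rw [abs_of_pos (hθ.trans_le (hb y v).1)]
  exact (hb y v).2

theorem Mobility.continuous_integral {d : ℕ} {m : Euc d → Euc d → ℝ} {θ Θ : ℝ}
    (hm : Mobility d m θ Θ) (e : Euc d) {φ : ℝ → ℝ} (hφ : Continuous φ) :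
    Continuous fun s => ∫ y in unitCube d, m y (φ s • e) := by
  refine continuous_parametric_integral_of_continuous ?_ (isCompact_unitCube d)
  exact hm.1.comp (g := fun p : Euc d × Euc d => m p.1 p.2)
    (f := fun p : ℝ × Euc d => (p.2, φ p.1 • e)) (by fun_prop)

theorem Mobility.abs_integral_le {d : ℕ} {m : Euc d → Euc d → ℝ} {θ Θ : ℝ}
    (hm : Mobility d m θ Θ) (v : Euc d) : |∫ y in unitCube d, m y v| ≤ Θ := by
  have := norm_setIntegral_le_of_norm_le_const (μ := volume) (f := fun y => m y v)
    (isCompact_unitCube d).measure_lt_top fun y _ => hm.abs_le y v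
  rwa [volume_real_unitCube, mul_one] at this

theorem StandingWave.integral_sub_effMob {d : ℕ} {m : Euc d → Euc d → ℝ} {θ Θ : ℝ}
    (hm : Mobility d m θ Θ) {W q : ℝ → ℝ} (hq : StandingWave W q) (hW : DoubleWell W) (e : Euc d) :
    ∫ s, ((∫ y in unitCube d, m y (deriv q s • e)) - effMob m q e) * deriv q s ^ 2 = 0 := by
  have h1 := hq.integrable_deriv_sq hW
  have h2 : Integrable fun s => (∫ y in unitCube d, m y (deriv q s • e)) * deriv q s ^ 2 :=
    h1.bdd_mul (c := Θ) (hm.continuous_integral e hq.continuous_deriv).aestronglyMeasurable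
      (Eventually.of_forall fun s => hm.abs_integral_le _)
  simp_rw [sub_mul]
  rw [integral_sub h2 (h1.const_mul _), integral_const_mul, effMob]
  simp_rw [integral_mul_const]
  rw [div_mul_cancel₀ _ (hq.integral_deriv_sq_pos hW).ne', sub_self]

theorem Mobility.exists_span_mFourier_approx {d : ℕ} {m : Euc d → Euc d → ℝ} {θ Θ : ℝ}
    (hm : Mobility d m θ Θ) (e : Euc d) {φ : ℝ → ℝ} (hφ : Continuous φ) (hpos : ∀ s, 0 < φ s)
    {B : ℝ} (hB : ∀ s, φ s ≤ B) {ε : ℝ} (hε : 0 < ε) :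
    ∃ τ : ℝ → ℝ, Continuous τ ∧
      ∃ f ∈ Submodule.span ℂ (range (UnitAddTorus.mFourier (d := Option (Fin d)))),
        ∀ s y, |m y (φ s • e) - (f (torusPt (τ s) y)).re| ≤ ε := by
  have hB0 : 0 < B := (hpos 0).trans_le (hB 0)
  let g : (Option (Fin d) → ℝ) → ℂ := fun x => (m (WithLp.toLp 2 fun i => x (some i))
    ((B * (1 + Real.cos (2 * Real.pi * x none)) / 2) • e) : ℝ)
  have hg : Continuous g := by
    refine Complex.continuous_ofReal.comp (hm.1.comp (g := fun p : Euc d × Euc d => m p.1 p.2)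
      (f := fun x : Option (Fin d) → ℝ => (WithLp.toLp 2 fun i => x (some i),
        (B * (1 + Real.cos (2 * Real.pi * x none)) / 2) • e)) ?_)
    fun_prop
  have hper : ∀ (x : Option (Fin d) → ℝ) (n : Option (Fin d) → ℤ),
      g (x + fun i => (n i : ℝ)) = g x := fun x n => by
    have h1 : Real.cos (2 * Real.pi * (x none + n none)) = Real.cos (2 * Real.pi * x none) := by
      rw [← Real.cos_add_int_mul_two_pi (2 * Real.pi * x none) (n none)]
      ring_nf
    have h2 := hm.2.1 (WithLp.toLp 2 fun i => x (some i))
      ((B * (1 + Real.cos (2 * Real.pi * x none)) / 2) • e)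
      (WithLp.toLp 2 fun i => (n (some i) : ℝ)) fun i => ⟨n (some i), rfl⟩
    simp only [g, Pi.add_apply, h1, ← h2]
    rfl
  obtain ⟨f, hf, hfg⟩ := _root_.exists_span_mFourier_approx hg hper hε
  refine ⟨fun s => Real.arccos (2 * φ s / B - 1) / (2 * Real.pi),
    (Real.continuous_arccos.comp (by fun_prop)).div_const _, f, hf, fun s y => ?_⟩
  set r := Real.arccos (2 * φ s / B - 1) / (2 * Real.pi) with hr
  have h1 : B * (1 + Real.cos (2 * Real.pi * r)) / 2 = φ s := by
    have h2 : 0 ≤ 2 * φ s / B := by have := hpos s; positivity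
    have h3 : 2 * φ s / B ≤ 2 := by rw [div_le_iff₀ hB0]; linarith [hB s]
    rw [hr, mul_div_cancel₀ _ (by positivity), Real.cos_arccos (by linarith) (by linarith)]
    field_simp
    ring_nf
  have h4 := hfg fun o => o.elim r fun i => y i
  have h5 : g (fun o => o.elim r fun i => y i) = (m y (φ s • e) : ℝ) := by
    simp only [g, Option.elim, h1]
  rw [h5] at h4
  have h6 := (Complex.abs_re_le_norm _).trans h4.le
  rwa [Complex.sub_re, Complex.ofReal_re] at h6

/-- Theorem 4.1: existence of approximate correctors in irrational directions. -/
theorem approximate_correctors_exist (d : ℕ) (hd : 2 ≤ d)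
    (m : Euc d → Euc d → ℝ) (θ Θ : ℝ) (hm : Mobility d m θ Θ)
    (W q : ℝ → ℝ) (hW : DoubleWell W) (hq : StandingWave W q)
    (e : Euc d) (he : ‖e‖ = 1) (hirr : ¬ RatDir e) (ν : ℝ) (hν : 0 < ν) :
    ∃ P : ℝ × Euc d → ℝ,
      (∀ (s : ℝ) (y z : Euc d), IsIntVec z → P (s, y + z) = P (s, y)) ∧
      ContDiff ℝ 2 P ∧
      (∃ C : ℝ, ∀ n : ℕ, n ≤ 2 → ∀ p : ℝ × Euc d, ‖iteratedFDeriv ℝ n P p‖ ≤ C) ∧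
      ∀ (s : ℝ) (y : Euc d),
        |(m y (deriv q s • e) - effMob m q e) * deriv q s
          - (dSS P s y + 2 * mixedDeriv e P s y + lapY P s y)
          + deriv (deriv W) (q s) * P (s, y)| ≤ ν * deriv q s := by
  obtain ⟨B, hB, -, -⟩ := hq.exists_bound hW
  obtain ⟨τ, hτ, f, hf, hmf⟩ := hm.exists_span_mFourier_approx e hq.continuous_deriv
    (hq.deriv_pos hW) hB (half_pos hν)
  let a : ℝ →ᵇ ℝ := BoundedContinuousFunction.ofNormedAddCommGroup
    (fun s => (∫ y in unitCube d, m y (deriv q s • e)) - effMob m q e)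
    ((hm.continuous_integral e hq.continuous_deriv).sub continuous_const) (Θ + |effMob m q e|)
    fun s => (norm_sub_le _ _).trans (add_le_add_left (hm.abs_integral_le _) _)
  obtain ⟨P, hper, ⟨hP, hPC⟩, hPe⟩ := (hq.solvable_span hW he hirr hτ hf 1).add
    (hq.solvable_of_integral_eq_zero e hW a (hq.integral_sub_effMob hm hW e))
  refine ⟨P, hper, hP, hPC, fun s y => ?_⟩
  have h1 := hPe s y
  simp only [one_mul] at h1
  change _ = deriv q s * (_ + ((∫ y in unitCube d, m y (deriv q s • e)) - effMob m q e)) at h1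
  have h2 : |(∫ y in unitCube d, m y (deriv q s • e)) -
      ∫ y in unitCube d, (f (torusPt (τ s) y)).re| ≤ ν / 2 := by
    have hi1 : IntegrableOn (fun y => m y (deriv q s • e)) (unitCube d) :=
      (hm.1.comp (Continuous.prodMk_left _)).continuousOn.integrableOn_compact (isCompact_unitCube d)
    have hi2 : IntegrableOn (fun y : Euc d => (f (torusPt (τ s) y)).re) (unitCube d) := by
      have := continuous_apply_torusPt f 1 (τ s)
      simp only [one_mul] at this
      exact (Complex.continuous_re.comp this).continuousOn.integrableOn_compact
        (isCompact_unitCube d)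
    rw [← integral_sub hi1 hi2]
    have := norm_setIntegral_le_of_norm_le_const (μ := volume)
      (f := fun y => m y (deriv q s • e) - (f (torusPt (τ s) y)).re)
      (isCompact_unitCube d).measure_lt_top fun y _ => hmf s y
    rwa [volume_real_unitCube, mul_one] at this
  have h3 : (m y (deriv q s • e) - effMob m q e) * deriv q s
      - (dSS P s y + 2 * mixedDeriv e P s y + lapY P s y) + deriv (deriv W) (q s) * P (s, y) =
      ((m y (deriv q s • e) - (f (torusPt (τ s) y)).re) -
        ((∫ y in unitCube d, m y (deriv q s • e)) -
          ∫ y in unitCube d, (f (torusPt (τ s) y)).re)) * deriv q s := by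
    rw [ellOp] at h1
    linear_combination -h1
  rw [h3, abs_mul, abs_of_pos (hq.deriv_pos hW s)]
  refine mul_le_mul_of_nonneg_right ((abs_sub _ _).trans ?_) (hq.deriv_pos hW s).le
  linarith [hmf s y]

end
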